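/- arXiv:2411.00271 — 2 statements merged into one kernel-verified Lean document; each statement's English description precedes it below -/
import Mathlib

section
/- Let R be a Dedekind domain with torsion class group, O ⊆ R an order with conductor f such that R/f is finite and every class of Cl(R) contains a prime ideal coprime to f. If |Cl(R)| ≠ 2 and O is transfer Krull, then Pic(O) ≅ Cl(R). -/
open scoped nonZeroDivisors

section MonoidDefs
variable {H B : Type*} [CommMonoid H] [CommMonoid B]

/-- The set of lengths of `a`: `{0}` for units, otherwise the set of `k` such that
`a` is a product of `k` atoms (irreducible elements). -/
def lengthsSet (a : H) : Set ℕ :=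
  {k | (IsUnit a ∧ k = 0) ∨
    (¬ IsUnit a ∧ ∃ l : Multiset H, Multiset.card l = k ∧ (∀ x ∈ l, Irreducible x) ∧ l.prod = a)}

/-- A transfer homomorphism: (T1) `B = θ(H)·B^×` and `θ⁻¹(B^×) = H^×`;
(T2) factorizations of `θ u` lift to factorizations of `u` up to associates. -/
def IsTransferHom (θ : H →* B) : Prop :=
  (∀ b : B, ∃ u : H, ∃ ε : Bˣ, b = θ u * ε) ∧
  (∀ u : H, IsUnit (θ u) → IsUnit u) ∧
  (∀ u : H, ∀ b c : B, θ u = b * c →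
    ∃ v w : H, u = v * w ∧ Associated (θ v) b ∧ Associated (θ w) c)

/-- A Krull monoid: a monoid admitting a divisor homomorphism into a
free abelian monoid. -/
def IsKrullMonoid (H : Type*) [CommMonoid H] : Prop :=
  ∃ (ι : Type) (d : H →* Multiplicative (ι →₀ ℕ)), ∀ a b : H, d a ∣ d b → a ∣ b

/-- Half-factorial: all factorizations of an element into atoms have the same length. -/
def IsHalfFactorial (A : Type*) [CommMonoid A] : Prop :=
  ∀ (a : A) (l m : Multiset A), (∀ x ∈ l, Irreducible x) → (∀ x ∈ m, Irreducible x) →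
    l.prod = a → m.prod = a → Multiset.card l = Multiset.card m

/-- An absolutely irreducible element: an atom all of whose powers factor uniquely
into atoms, up to associates. -/
def AbsolutelyIrreducible (a : H) : Prop :=
  Irreducible a ∧ ∀ n : ℕ, 0 < n → ∀ l m : Multiset H,
    (∀ x ∈ l, Irreducible x) → (∀ x ∈ m, Irreducible x) →
    l.prod = a ^ n → m.prod = a ^ n → Multiset.Rel Associated l m

end MonoidDefs

section RingDefs
variable {R : Type*} [CommRing R]

/-- The conductor of a subring `O ⊆ R`: the largest ideal of `R` contained in `O`. -/
def Subring.conductor (O : Subring R) : Ideal R where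
  carrier := {x | ∀ r : R, x * r ∈ O}
  add_mem' := by
    intro a b ha hb r
    have h : (a + b) * r = a * r + b * r := by ring
    rw [h]; exact O.add_mem (ha r) (hb r)
  zero_mem' := by intro r; simpa using O.zero_mem
  smul_mem' := by
    intro c x hx r
    have h : c • x * r = x * (c * r) := by simp [smul_eq_mul]; ring
    rw [h]; exact hx (c * r)

/-- `a` is a regular element modulo the ideal `f`. -/
def RegF (f : Ideal R) (a : R) : Prop := IsUnit (Ideal.Quotient.mk f a)

end RingDefs

section TK
variable {K : Type*} [CommRing K]

/-- `x` and `y` are associated within the submonoid `H` of `K`. -/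
def AssocIn (H : Submonoid K) (x y : K) : Prop :=
  ∃ ε ∈ H, (∃ ε' ∈ H, ε * ε' = 1) ∧ x = y * ε

end TK

variable {R₀ : Type*}

/-- `H` is a Krull overmonoid of `O^∙` inside the quotient field of `O` (which is the
quotient field of `R`), with `O^∙ ⊆ H ⊆ q(O^∙)`, such that the inclusion `O^∙ ↪ H`
is a transfer homomorphism; this witnesses that `O` is transfer Krull. -/
structure IsTKOvermonoid {R : Type*} [CommRing R] [IsDomain R] [IsDedekindDomain R]
    (O : Subring R) (H : Submonoid (FractionRing R)) : Prop where
  nonzero : ∀ x ∈ H, x ≠ 0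
  incl : ∀ a : R, a ∈ O → a ≠ 0 → algebraMap R (FractionRing R) a ∈ H
  inQuot : ∀ x ∈ H, ∃ a b : R, a ∈ O ∧ b ∈ O ∧ a ≠ 0 ∧ b ≠ 0 ∧
    x * algebraMap R (FractionRing R) b = algebraMap R (FractionRing R) a
  krull : IsKrullMonoid ↥H
  t1 : ∀ x ∈ H, ∃ a : R, a ∈ O ∧ a ≠ 0 ∧ ∃ ε ∈ H, (∃ ε' ∈ H, ε * ε' = 1) ∧
    x = algebraMap R (FractionRing R) a * ε
  t1' : ∀ a : R, a ∈ O → a ≠ 0 →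
    (∃ y ∈ H, algebraMap R (FractionRing R) a * y = 1) → ∃ b ∈ O, a * b = 1
  t2 : ∀ a : R, a ∈ O → a ≠ 0 → ∀ x ∈ H, ∀ y ∈ H,
    algebraMap R (FractionRing R) a = x * y →
    ∃ v w : R, v ∈ O ∧ w ∈ O ∧ a = v * w ∧
      AssocIn H (algebraMap R (FractionRing R) v) x ∧
      AssocIn H (algebraMap R (FractionRing R) w) y

/-- Combinatorial data extracted from a transfer Krull order. -/
structure TKData {ι G : Type*} [CommGroup G] (c : ι → G) (Og : Multiset ι → Prop)
    (E : Multiset ι → Multiset ι → Prop) (N : ℕ) : Prop where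
  surj : ∀ g : G, ∃ p, c p = g
  hN : 0 < N
  og_z : ∀ A, Og A → (A.map c).prod = 1
  og_add : ∀ A B, Og A → Og B → Og (A + B)
  og_sub : ∀ A B, Og A → Og (A + B) → Og B
  e_refl : ∀ A, (A.map c).prod = 1 → E A A
  e_symm : ∀ A B, E A B → E B A
  e_trans : ∀ A B C, E A B → E B C → E A C
  e_add : ∀ A B C D, E A B → E C D → E (A + C) (B + D)
  split : ∀ X Y₁ Y₂, (Y₁.map c).prod = 1 → (Y₂.map c).prod = 1 → Og X → E X (Y₁ + Y₂) →
    ∃ V W, X = V + W ∧ Og V ∧ Og W ∧ E V Y₁ ∧ E W Y₂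
  e_zero : ∀ A, E A 0 → A = 0
  og_pow : ∀ A, (A.map c).prod = 1 → Og (N • A)

namespace TKData

variable {ι G : Type*} [CommGroup G] {c : ι → G} {Og : Multiset ι → Prop}
    {E : Multiset ι → Multiset ι → Prop} {N : ℕ}

theorem e_nsmul (h : TKData c Og E N) {A B : Multiset ι} (hE : E A B) (n : ℕ) :
    E (n • A) (n • B) := by
  induction n with
  | zero => simpa using h.e_refl 0 (by simp)
  | succ n ih => rw [succ_nsmul, succ_nsmul]; exact h.e_add _ _ _ _ ih hE

theorem z_sum (c : ι → G) (L : Multiset (Multiset ι)) (hL : ∀ Y ∈ L, (Y.map c).prod = 1) :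
    (L.sum.map c).prod = 1 := by
  induction L using Multiset.induction_on with
  | empty => simp
  | cons Y L ih =>
    rw [Multiset.sum_cons, Multiset.map_add, Multiset.prod_add, hL Y (by simp),
      ih (fun Z hZ => hL Z (by simp [hZ])), one_mul]

theorem multi_split (h : TKData c Og E N) (L : Multiset (Multiset ι)) :
    ∀ X, (∀ Y ∈ L, (Y.map c).prod = 1) → Og X → E X L.sum →
    ∃ V : Multiset (Multiset ι), Multiset.card V = Multiset.card L ∧ V.sum = X ∧
      ∀ v ∈ V, Og v ∧ ∃ Y ∈ L, E v Y := by
  induction L using Multiset.induction_on with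
  | empty =>
    intro X _ _ hE
    have := h.e_zero X (by simpa using hE)
    subst this
    exact ⟨0, by simp⟩
  | cons Y L ih =>
    intro X hZ hX hE
    rw [Multiset.sum_cons] at hE
    have hL : ∀ Y ∈ L, (Y.map c).prod = 1 := fun Z hZ' => hZ Z (by simp [hZ'])
    obtain ⟨V, W, rfl, hV, hW, e1, e2⟩ := h.split X Y L.sum (hZ Y (by simp)) (z_sum c L hL) hX hE
    obtain ⟨Vs, h1, h2, h3⟩ := ih W hL hW e2
    refine ⟨V ::ₘ Vs, by simp [h1], by simp [h2], ?_⟩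
    intro v hv
    rw [Multiset.mem_cons] at hv
    rcases hv with rfl | hv
    · exact ⟨hV, Y, by simp, e1⟩
    · obtain ⟨a, Z, hZ, b⟩ := h3 v hv
      exact ⟨a, Z, by simp [hZ], b⟩

theorem pow_split (h : TKData c Og E N) (x : Multiset ι) (L : Multiset (Multiset ι))
    (hx : (x.map c).prod = 1) (hL : ∀ Y ∈ L, (Y.map c).prod = 1 ∧ Y ≠ 0) (hE : E x L.sum) :
    ∃ V : Multiset (Multiset ι), Multiset.card V = N * Multiset.card L ∧ V.sum = N • x ∧
      ∀ v ∈ V, Og v ∧ v ≠ 0 ∧ (∀ a ∈ v, a ∈ x) ∧ ∃ Y ∈ L, E v Y := by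
  have hs : (N • L).sum = N • L.sum := Multiset.sum_nsmul L N
  obtain ⟨V, h1, h2, h3⟩ := h.multi_split (N • L) (N • x)
    (fun Y hY => (hL Y (Multiset.mem_of_mem_nsmul hY)).1) (h.og_pow x hx)
    (by rw [hs]; exact h.e_nsmul hE N)
  refine ⟨V, by simpa using h1, h2, ?_⟩
  intro v hv
  obtain ⟨a, Y, hY, b⟩ := h3 v hv
  have hY' := Multiset.mem_of_mem_nsmul hY
  refine ⟨a, ?_, ?_, Y, hY', b⟩
  · rintro rfl
    exact (hL Y hY').2 (h.e_zero _ (h.e_symm _ _ b))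
  · intro p hp
    have : v ≤ V.sum := Multiset.single_le_sum (by simp) _ hv
    rw [h2] at this
    exact Multiset.mem_of_mem_nsmul (Multiset.mem_of_le this hp)

theorem self_split (h : TKData c Og E N) (x : Multiset ι)
    (hx : (x.map c).prod = 1) (hx0 : x ≠ 0) :
    ∃ V : Multiset (Multiset ι), Multiset.card V = N ∧ V.sum = N • x ∧
      ∀ v ∈ V, Og v ∧ v ≠ 0 ∧ (∀ a ∈ v, a ∈ x) ∧ E v x := by
  obtain ⟨V, h1, h2, h3⟩ := h.pow_split x {x} hx (by simpa using ⟨hx, hx0⟩)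
    (by simpa using h.e_refl x hx)
  exact ⟨V, by simpa using h1, h2, by simpa using h3⟩

theorem card_all (V : Multiset (Multiset ι)) (n : ℕ) (h1 : ∀ v ∈ V, n ≤ Multiset.card v)
    (h2 : Multiset.card V.sum = n * Multiset.card V) : ∀ v ∈ V, Multiset.card v = n := by
  have key : ∀ V : Multiset (Multiset ι), (∀ v ∈ V, n ≤ Multiset.card v) →
      n * Multiset.card V ≤ Multiset.card V.sum := by
    intro V
    induction V using Multiset.induction_on with
    | empty => simp
    | cons a V ih =>
      intro hV
      have := ih (fun v hv => hV v (by simp [hv]))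
      have := hV a (by simp)
      simp only [Multiset.card_cons, Multiset.sum_cons, Multiset.card_add]
      linarith
  intro v hv
  obtain ⟨W, rfl⟩ := Multiset.exists_cons_of_mem hv
  have a1 := key W (fun w hw => h1 w (by simp [hw]))
  have a2 := h1 v (by simp)
  simp only [Multiset.card_cons, Multiset.sum_cons, Multiset.card_add] at h2
  linarith

theorem exists_mem (V : Multiset (Multiset ι)) (p : ι) (hp : p ∈ V.sum) : ∃ v ∈ V, p ∈ v :=
  Multiset.mem_join.1 hp

theorem mem_nsmul_of (hN : 0 < N) {x : Multiset ι} {p : ι} (hp : p ∈ x) : p ∈ N • x :=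
  Multiset.mem_nsmul.2 ⟨hN.ne', hp⟩

theorem eq_pair {v : Multiset ι} {p : ι} (hp : p ∈ v) (hv : Multiset.card v = 2) :
    ∃ a, v = {p, a} := by
  obtain ⟨w, rfl⟩ := Multiset.exists_cons_of_mem hp
  obtain ⟨a, rfl⟩ := Multiset.card_eq_one.1 (by simpa using hv)
  exact ⟨a, rfl⟩

theorem eq_triple {v : Multiset ι} {p : ι} (hp : p ∈ v) (hv : Multiset.card v = 3) :
    ∃ a b, v = {p, a, b} := by
  obtain ⟨w, rfl⟩ := Multiset.exists_cons_of_mem hp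
  obtain ⟨a, b, rfl⟩ := Multiset.card_eq_two.1 (by simpa using hv)
  exact ⟨a, b, rfl⟩

theorem two_le {v : Multiset ι} (hz : (v.map c).prod = 1) (h0 : v ≠ 0)
    (hc : ∀ a ∈ v, c a ≠ 1) : 2 ≤ Multiset.card v := by
  by_contra hlt
  have h1 : Multiset.card v ≠ 0 := by simpa using h0
  obtain ⟨a, rfl⟩ := Multiset.card_eq_one.1 (show Multiset.card v = 1 by omega)
  exact hc a (by simp) (by simpa using hz)

theorem single (h : TKData c Og E N) (p : ι) (hp : c p = 1) : Og {p} := by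
  obtain ⟨V, h1, h2, h3⟩ := h.self_split {p} (by simpa using hp) (by simp)
  have hall := card_all V 1 (fun v hv => Multiset.card_pos.2 (h3 v hv).2.1) (by simp [h2, h1])
  obtain ⟨v, hv⟩ := Multiset.card_pos_iff_exists_mem.1 (h1 ▸ h.hN)
  obtain ⟨a, ha⟩ := Multiset.card_eq_one.1 (hall v hv)
  subst ha
  have := (h3 _ hv).2.2.1 a (by simp)
  simp only [Multiset.mem_singleton] at this
  subst this
  exact (h3 _ hv).1

theorem pair (h : TKData c Og E N) (p q : ι) (hpq : c p * c q = 1) (hp : c p ≠ 1)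
    (hh : c p * c p ≠ 1 ∨ p = q) : Og {p, q} := by
  have hq : c q ≠ 1 := by intro hq; apply hp; simpa [hq] using hpq
  obtain ⟨V, h1, h2, h3⟩ := h.self_split {p, q} (by simpa using hpq) (by simp)
  have hall := card_all V 2 (fun v hv => two_le (h.og_z _ (h3 v hv).1) (h3 v hv).2.1 (by
    intro a ha
    have := (h3 v hv).2.2.1 a ha
    simp only [Multiset.insert_eq_cons, Multiset.mem_cons, Multiset.mem_singleton] at this
    rcases this with rfl | rfl <;> assumption)) (by simp [h2, h1, mul_comm])
  obtain ⟨v, hv, hpv⟩ := exists_mem V p (by rw [h2]; exact mem_nsmul_of h.hN (by simp))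
  obtain ⟨a, rfl⟩ := eq_pair hpv (hall v hv)
  have := (h3 _ hv).2.2.1 a (by simp)
  simp only [Multiset.insert_eq_cons, Multiset.mem_cons, Multiset.mem_singleton] at this
  rcases this with rfl | rfl
  · rcases hh with hh | rfl
    · exact absurd (by simpa using h.og_z _ (h3 _ hv).1) hh
    · exact (h3 _ hv).1
  · exact (h3 _ hv).1

/-- classes of order at least three are represented uniquely -/
theorem uniq (h : TKData c Og E N) (p p' : ι) (B : Multiset ι) (hc : c p = c p')
    (h2 : c p * c p ≠ 1) (hB : Og (p ::ₘ B)) : Og (p' ::ₘ B) := by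
  have h1 : c p ≠ 1 := by intro h1; apply h2; simp [h1]
  obtain ⟨t, ht⟩ := h.surj (c p)⁻¹
  have a1 := h.pair p t (by simp [ht]) h1 (Or.inl h2)
  have a2 := h.pair p' t (by simp [ht, hc]) (hc ▸ h1) (Or.inl (hc ▸ h2))
  refine h.og_sub {p, t} _ a1 ?_
  have : ({p, t} : Multiset ι) + p' ::ₘ B = {p', t} + p ::ₘ B := by
    simp only [Multiset.insert_eq_cons, ← Multiset.singleton_add]
    abel
  rw [this]
  exact h.og_add _ _ a2 hB

end TKData
namespace TKData

variable {ι G : Type*} [CommGroup G] {c : ι → G} {Og : Multiset ι → Prop}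
    {E : Multiset ι → Multiset ι → Prop} {N : ℕ}

theorem uniq' (h : TKData c Og E N) {x y : Multiset ι} (p p' : ι) (B : Multiset ι)
    (hx : x = p ::ₘ B) (hy : y = p' ::ₘ B) (hc : c p = c p')
    (h2 : c p * c p ≠ 1) (hB : Og x) : Og y := by
  subst hx hy
  exact h.uniq p p' B hc h2 hB

theorem mem3 {a p q t : ι} (h : a ∈ ({p, q, t} : Multiset ι)) : a = p ∨ a = q ∨ a = t := by
  simpa using h

/-- a three element zero-sum containing `p`, inside `{p,q,t}`, is either `{p,p,p}`,
or implies `{p,q,t}` itself is good. -/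
theorem triple_aux (h : TKData c Og E N) (p q t a b : ι) (hz : c p * c q * c t = 1)
    (hp : c p ≠ 1) (hq : c q ≠ 1) (ht : c t ≠ 1)
    (hq2 : c q * c q ≠ 1) (ht2 : c t * c t ≠ 1)
    (ha : a ∈ ({p, q, t} : Multiset ι)) (hb : b ∈ ({p, q, t} : Multiset ι))
    (hO : Og {p, a, b}) : Og {p, q, t} ∨ (a = p ∧ b = p) := by
  have hz' : c p * (c a * c b) = 1 := by simpa using h.og_z _ hO
  have e1 : c t = (c p * c q)⁻¹ := eq_inv_of_mul_eq_one_right hz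
  -- the doubled case
  have key : ∀ r s : ι, c p * c r * c s = 1 → c r * c r ≠ 1 → c s * c s ≠ 1 →
      c p * (c p * c r) = 1 → Og {p, p, r} → Og {p, r, s} := by
    intro r s hrs hr2 hs2 hppr hO
    have hcs : c p = c s := by
      have : c p * c r * c p = c p * c r * c s := by
        rw [hrs, ← hppr, mul_comm]
      exact mul_left_cancel this
    refine h.uniq' p s {p, r} ?_ ?_ hcs (hcs ▸ hs2) hO
    · simp only [Multiset.insert_eq_cons]
    · simp only [Multiset.insert_eq_cons, ← Multiset.singleton_add]; abel
  have key2 : ∀ r s : ι, c p * c r * c s = 1 → c r * c r ≠ 1 →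
      c p * (c r * c r) = 1 → Og {p, r, r} → Og {p, r, s} := by
    intro r s hrs hr2 hprr hO
    have hcs : c r = c s := by
      have : c p * c r * c r = c p * c r * c s := by
        rw [hrs, ← hprr, mul_assoc]
      exact mul_left_cancel this
    refine h.uniq' r s {p, r} ?_ ?_ hcs hr2 hO
    · simp only [Multiset.insert_eq_cons, ← Multiset.singleton_add]; abel
    · simp only [Multiset.insert_eq_cons, ← Multiset.singleton_add]; abel
  have hzs : c p * c t * c q = 1 := by rw [← hz]; exact mul_right_comm _ _ _
  have sw : ({p, t, q} : Multiset ι) = {p, q, t} := by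
    simp only [Multiset.insert_eq_cons, ← Multiset.singleton_add]; abel
  have sw2 : ∀ r : ι, ({p, r, p} : Multiset ι) = {p, p, r} := by
    intro r
    simp only [Multiset.insert_eq_cons, ← Multiset.singleton_add]; abel
  rcases mem3 ha with rfl | rfl | rfl <;> rcases mem3 hb with rfl | rfl | rfl
  · exact Or.inr ⟨rfl, rfl⟩
  · exact Or.inl (key _ _ hz hq2 ht2 hz' hO)
  · exact Or.inl (sw ▸ key _ _ hzs ht2 hq2 hz' hO)
  · exact Or.inl (key _ _ hz hq2 ht2 (by rw [mul_comm (c a)] at hz'; exact hz') (sw2 _ ▸ hO))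
  · exact Or.inl (key2 _ _ hz hq2 hz' hO)
  · exact Or.inl hO
  · exact Or.inl (sw ▸ key _ _ hzs ht2 hq2 (by rw [mul_comm (c a)] at hz'; exact hz') (sw2 _ ▸ hO))
  · exact Or.inl (sw ▸ hO)
  · exact Or.inl (sw ▸ key2 _ _ hzs ht2 hz' hO)

theorem pair_class {a b : ι} (h : TKData c Og E N) (hO : Og {a, b}) : c a * c b = 1 := by
  simpa using h.og_z _ hO

/-- all classes of order at least three -/
theorem triple_i (h : TKData c Og E N) (p q t : ι) (hz : c p * c q * c t = 1)
    (hp : c p ≠ 1) (hq : c q ≠ 1) (ht : c t ≠ 1)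
    (hp2 : c p * c p ≠ 1) (hq2 : c q * c q ≠ 1) (ht2 : c t * c t ≠ 1) : Og {p, q, t} := by
  have npq : c p * c q ≠ 1 := fun e => ht (by rwa [e, one_mul] at hz)
  have npt : c p * c t ≠ 1 := fun e => hq (by rwa [mul_right_comm, e, one_mul] at hz)
  have nqt : c q * c t ≠ 1 := fun e => hp (by rwa [mul_assoc, e, mul_one] at hz)
  have nqp : c q * c p ≠ 1 := by rwa [mul_comm]
  have ntp : c t * c p ≠ 1 := by rwa [mul_comm]
  have ntq : c t * c q ≠ 1 := by rwa [mul_comm]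
  have hx : ((({p, q, t} : Multiset ι)).map c).prod = 1 := by simpa [mul_assoc] using hz
  obtain ⟨V, h1, h2, h3⟩ := h.self_split {p, q, t} hx (by simp)
  have hall := card_all V 3 (fun v hv => by
    have hm := (h3 v hv).2.2.1
    have c2 := two_le (h.og_z _ (h3 v hv).1) (h3 v hv).2.1 (by
      intro a ha
      rcases mem3 (hm a ha) with rfl | rfl | rfl <;> assumption)
    by_contra hlt
    obtain ⟨a, b, rfl⟩ := Multiset.card_eq_two.1 (show Multiset.card v = 2 by omega)
    have hab := h.pair_class (h3 _ hv).1
    rcases mem3 (hm a (by simp)) with rfl | rfl | rfl <;>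
    rcases mem3 (hm b (by simp)) with rfl | rfl | rfl <;> contradiction)
    (by simp [h2, h1, mul_comm])
  obtain ⟨v, hv, hpv⟩ := exists_mem V p (by rw [h2]; exact mem_nsmul_of h.hN (by simp))
  obtain ⟨a, b, rfl⟩ := eq_triple hpv (hall v hv)
  obtain ⟨hO, -, hm, hE⟩ := h3 _ hv
  rcases h.triple_aux p q t a b hz hp hq ht hq2 ht2 (hm a (by simp)) (hm b (by simp)) hO with
    hgood | ⟨rfl, rfl⟩
  · exact hgood
  -- now `{b,b,b}` is equivalent to `{b,q,t}`
  obtain ⟨r, hr⟩ := h.surj (c b)⁻¹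
  have hbr : c b * c r = 1 := by simp [hr]
  have hr1 : c r ≠ 1 := by simpa [hr] using hp
  have hrr : ((({r, r, r} : Multiset ι)).map c).prod = 1 := by
    have := h.og_z _ hO
    simp only [Multiset.insert_eq_cons, Multiset.map_cons, Multiset.map_singleton,
      Multiset.prod_cons, Multiset.prod_singleton, hr] at this ⊢
    rw [← mul_inv, ← mul_inv, this, inv_one]
  have hE2 : E ({b, q, t} + {r, r, r}) ({{b, r}, {b, r}, {b, r}} : Multiset (Multiset ι)).sum := by
    have e := h.e_add _ _ _ _ (h.e_symm _ _ hE) (h.e_refl _ hrr)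
    have e2 : ({{b, r}, {b, r}, {b, r}} : Multiset (Multiset ι)).sum = {b, b, b} + {r, r, r} := by
      simp only [Multiset.insert_eq_cons, Multiset.sum_cons, Multiset.sum_singleton]
      simp only [← Multiset.singleton_add]
      abel
    rwa [e2]
  obtain ⟨W, w1, w2, w3⟩ := h.pow_split _ _ (by
      rw [Multiset.map_add, Multiset.prod_add, hx, hrr, one_mul]) (by simpa using hbr) hE2
  have mem4 : ∀ a, a ∈ ({b, q, t} + {r, r, r} : Multiset ι) → a = b ∨ a = q ∨ a = t ∨ a = r := by
    intro a ha
    simp only [Multiset.insert_eq_cons, Multiset.mem_add, Multiset.mem_cons,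
      Multiset.mem_singleton] at ha
    tauto
  have hall2 := card_all W 2 (fun v hv => by
    have hm := (w3 v hv).2.2.1
    refine two_le (h.og_z _ (w3 v hv).1) (w3 v hv).2.1 (by
      intro a ha
      rcases mem4 a (hm a ha) with rfl | rfl | rfl | rfl <;> assumption))
    (by simp [w2, w1]; ring)
  have fin : ∀ s, s ∈ ({b, q, t} : Multiset ι) → c s * c b ≠ 1 → c s * c q ≠ 1 → c s * c t ≠ 1 →
      c s = c b := by
    intro s hs n1 n2 n3
    obtain ⟨w, hw, hsw⟩ := exists_mem W s (by
      rw [w2]; exact mem_nsmul_of h.hN (Multiset.mem_add.2 (Or.inl hs)))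
    obtain ⟨a, rfl⟩ := eq_pair hsw (hall2 w hw)
    have hc := h.pair_class (w3 _ hw).1
    rcases mem4 a ((w3 _ hw).2.2.1 a (by simp)) with rfl | rfl | rfl | rfl
    · contradiction
    · contradiction
    · contradiction
    · rw [hr] at hc
      exact mul_inv_eq_one.1 hc
  have cq : c q = c b := fin q (by simp) nqp hq2 nqt
  have ct : c t = c b := fin t (by simp) ntp ntq ht2
  have s1 : Og {b, b, q} := h.uniq' b q {b, b}
    (by simp only [Multiset.insert_eq_cons])
    (by simp only [Multiset.insert_eq_cons, ← Multiset.singleton_add]; abel) cq.symm hp2 hO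
  exact h.uniq' b t {b, q} (by simp only [Multiset.insert_eq_cons])
    (by simp only [Multiset.insert_eq_cons, ← Multiset.singleton_add]; abel) ct.symm hp2 s1

theorem weight_le (V : Multiset (Multiset ι)) (n : ℕ) (w : Multiset ι →+ ℕ)
    (h1 : ∀ v ∈ V, n ≤ w v) : n * Multiset.card V ≤ w V.sum := by
  induction V using Multiset.induction_on with
  | empty => simp
  | cons a V ih =>
    have := ih (fun v hv => h1 v (by simp [hv]))
    have := h1 a (by simp)
    simp only [Multiset.card_cons, Multiset.sum_cons, map_add]
    linarith

/-- exactly one class of order two -/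
theorem triple_ii (h : TKData c Og E N) (p q t : ι) (hz : c p * c q * c t = 1)
    (hp : c p ≠ 1) (hq : c q ≠ 1) (ht : c t ≠ 1)
    (hp2 : c p * c p = 1) (hq2 : c q * c q ≠ 1) (ht2 : c t * c t ≠ 1) : Og {p, q, t} := by
  classical
  have npq : c p * c q ≠ 1 := fun e => ht (by rwa [e, one_mul] at hz)
  have npt : c p * c t ≠ 1 := fun e => hq (by rwa [mul_right_comm, e, one_mul] at hz)
  have nqt : c q * c t ≠ 1 := fun e => hp (by rwa [mul_assoc, e, mul_one] at hz)
  have nqp : c q * c p ≠ 1 := by rwa [mul_comm]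
  have ntp : c t * c p ≠ 1 := by rwa [mul_comm]
  have ntq : c t * c q ≠ 1 := by rwa [mul_comm]
  have hx : ((({p, q, t} : Multiset ι)).map c).prod = 1 := by simpa [mul_assoc] using hz
  have hpi : (c p)⁻¹ = c p := inv_eq_of_mul_eq_one_left hp2
  have hne : ¬ E {p, p} {p, q, t} := by
    intro hE
    obtain ⟨q', hq'⟩ := h.surj (c q)⁻¹
    obtain ⟨t', ht'⟩ := h.surj (c t)⁻¹
    have hx' : ((({p, q', t'} : Multiset ι)).map c).prod = 1 := by
      simp only [Multiset.insert_eq_cons, Multiset.map_cons, Multiset.map_singleton,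
        Multiset.prod_cons, Multiset.prod_singleton, hq', ht']
      rw [← hpi, ← mul_inv, ← mul_inv, ← mul_assoc, hz, inv_one]
    have hE2 : E ({p, p} + {p, q', t'}) ({{p, p}, {q, q'}, {t, t'}} : Multiset (Multiset ι)).sum := by
      have e := h.e_add _ _ _ _ hE (h.e_refl _ hx')
      have e2 : ({{p, p}, {q, q'}, {t, t'}} : Multiset (Multiset ι)).sum
          = {p, q, t} + {p, q', t'} := by
        simp only [Multiset.insert_eq_cons, Multiset.sum_cons, Multiset.sum_singleton]
        simp only [← Multiset.singleton_add]
        abel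
      rwa [e2]
    obtain ⟨W, w1, w2, w3⟩ := h.pow_split _ _ (by
      rw [Multiset.map_add, Multiset.prod_add, hx', mul_one]; simpa using hp2)
      (by simp [hp2, hq', ht']) hE2
    have mem4 : ∀ a, a ∈ ({p, p} + {p, q', t'} : Multiset ι) → a = p ∨ a = q' ∨ a = t' := by
      intro a ha
      simp only [Multiset.insert_eq_cons, Multiset.mem_add, Multiset.mem_cons,
        Multiset.mem_singleton] at ha
      tauto
    have hpq' : p ≠ q' := by
      rintro rfl
      rw [← hpi, inv_inj] at hq'
      exact hq2 (hq' ▸ hp2)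
    have hpt' : p ≠ t' := by
      rintro rfl
      rw [← hpi, inv_inj] at ht'
      exact ht2 (ht' ▸ hp2)
    have hW := weight_le W 6 (2 • Multiset.cardHom + Multiset.countAddMonoidHom p) (by
      intro v hv
      obtain ⟨vO, v0, vm, -⟩ := w3 v hv
      have vz := h.og_z _ vO
      have c2 := two_le vz v0 (by
        intro a ha
        rcases mem4 a (vm a ha) with rfl | rfl | rfl
        · assumption
        · simpa [hq'] using hq
        · simpa [ht'] using ht)
      show 6 ≤ 2 * Multiset.card v + Multiset.count p v
      by_cases hc : 3 ≤ Multiset.card v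
      · omega
      obtain ⟨a, b, rfl⟩ := Multiset.card_eq_two.1 (show Multiset.card v = 2 by omega)
      have hab := h.pair_class vO
      have hab' : (c a)⁻¹ * (c b)⁻¹ = 1 := by rw [← mul_inv, hab, inv_one]
      rcases mem4 a (vm a (by simp)) with rfl | rfl | rfl <;>
      rcases mem4 b (vm b (by simp)) with rfl | rfl | rfl <;>
      first
      | (simp; done)
      | (exfalso; simp only [hq', ht', hpi, inv_inv] at hab'; contradiction))
    rw [w2, w1] at hW
    have e5 : (2 • Multiset.cardHom + Multiset.countAddMonoidHom p : Multiset ι →+ ℕ)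
        (N • ({p, p} + {p, q', t'}) : Multiset ι) = N * 13 := by
      rw [map_nsmul]
      have e6 : (2 • Multiset.cardHom + Multiset.countAddMonoidHom p : Multiset ι →+ ℕ)
          ({p, p} + {p, q', t'}) = 2 * Multiset.card ({p, p} + {p, q', t'} : Multiset ι)
            + Multiset.count p ({p, p} + {p, q', t'} : Multiset ι) := rfl
      rw [e6]
      simp [hpq', hpt']
    rw [e5] at hW
    have := h.hN
    simp at hW
    omega
  obtain ⟨V, h1, h2, h3⟩ := h.self_split {p, q, t} hx (by simp)
  have hall := card_all V 3 (fun v hv => by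
    have hm := (h3 v hv).2.2.1
    have c2 := two_le (h.og_z _ (h3 v hv).1) (h3 v hv).2.1 (by
      intro a ha
      rcases mem3 (hm a ha) with rfl | rfl | rfl <;> assumption)
    by_contra hlt
    obtain ⟨a, b, rfl⟩ := Multiset.card_eq_two.1 (show Multiset.card v = 2 by omega)
    have hab := h.pair_class (h3 _ hv).1
    have hE := (h3 _ hv).2.2.2
    rcases mem3 (hm a (by simp)) with rfl | rfl | rfl <;>
    rcases mem3 (hm b (by simp)) with rfl | rfl | rfl <;> contradiction)
    (by simp [h2, h1, mul_comm])
  obtain ⟨v, hv, hpv⟩ := exists_mem V p (by rw [h2]; exact mem_nsmul_of h.hN (by simp))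
  obtain ⟨a, b, rfl⟩ := eq_triple hpv (hall v hv)
  obtain ⟨hO, -, hm, hE⟩ := h3 _ hv
  rcases h.triple_aux p q t a b hz hp hq ht hq2 ht2 (hm a (by simp)) (hm b (by simp)) hO with
    hgood | ⟨rfl, rfl⟩
  · exact hgood
  · exfalso
    have := h.og_z _ hO
    simp only [Multiset.insert_eq_cons, Multiset.map_cons, Multiset.map_singleton,
        Multiset.prod_cons, Multiset.prod_singleton, hp2, mul_one] at this
    exact hp this

end TKData
namespace TKData

variable {ι G : Type*} [CommGroup G] {c : ι → G} {Og : Multiset ι → Prop}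
    {E : Multiset ι → Multiset ι → Prop} {N : ℕ}

/-- `{a,a}` is not equivalent to `{b,b,d,d}` for order two classes -/
theorem sq_not_equiv (h : TKData c Og E N) (a b d : ι) (ha : c a ≠ 1)
    (ha2 : c a * c a = 1) (hb2 : c b * c b = 1) (hd2 : c d * c d = 1) :
    ¬ E {a, a} ({b, b} + {d, d}) := by
  intro hE
  obtain ⟨V, W, hVW, hV, hW, e1, e2⟩ := h.split {a, a} {b, b} {d, d} (by simpa using hb2)
    (by simpa using hd2) (h.pair a a ha2 ha (Or.inr rfl)) hE
  have hV0 : V ≠ 0 := by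
    rintro rfl
    have := h.e_zero _ (h.e_symm _ _ e1)
    simp at this
  have hW0 : W ≠ 0 := by
    rintro rfl
    have := h.e_zero _ (h.e_symm _ _ e2)
    simp at this
  have mm : ∀ x ∈ V + W, x = a := by
    rw [← hVW]; intro x hx; simpa using hx
  have v2 := two_le (h.og_z _ hV) hV0 (fun x hx => by
    rw [mm x (Multiset.mem_add.2 (Or.inl hx))]; exact ha)
  have w2 := two_le (h.og_z _ hW) hW0 (fun x hx => by
    rw [mm x (Multiset.mem_add.2 (Or.inr hx))]; exact ha)
  have := congrArg Multiset.card hVW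
  simp at this
  omega

/-- all three classes of order two -/
theorem triple_iii (h : TKData c Og E N) (p q t : ι) (hz : c p * c q * c t = 1)
    (hp : c p ≠ 1) (hq : c q ≠ 1) (ht : c t ≠ 1)
    (hp2 : c p * c p = 1) (hq2 : c q * c q = 1) (ht2 : c t * c t = 1) : Og {p, q, t} := by
  have npq : c p * c q ≠ 1 := fun e => ht (by rwa [e, one_mul] at hz)
  have npt : c p * c t ≠ 1 := fun e => hq (by rwa [mul_right_comm, e, one_mul] at hz)
  have nqt : c q * c t ≠ 1 := fun e => hp (by rwa [mul_assoc, e, mul_one] at hz)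
  have nqp : c q * c p ≠ 1 := by rwa [mul_comm]
  have ntp : c t * c p ≠ 1 := by rwa [mul_comm]
  have ntq : c t * c q ≠ 1 := by rwa [mul_comm]
  have hx : ((({p, q, t} : Multiset ι)).map c).prod = 1 := by simpa [mul_assoc] using hz
  have hpp := h.pair p p hp2 hp (Or.inr rfl)
  have hqq := h.pair q q hq2 hq (Or.inr rfl)
  have htt := h.pair t t ht2 ht (Or.inr rfl)
  have hX := h.og_add _ _ (h.og_add _ _ hpp hqq) htt
  have eX : ({p, p} + {q, q} + {t, t} : Multiset ι) = {p, q, t} + {p, q, t} := by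
    simp only [Multiset.insert_eq_cons, ← Multiset.singleton_add]; abel
  obtain ⟨V, W, hVW, hV, hW, e1, e2⟩ := h.split _ {p, q, t} {p, q, t} hx hx hX (by
    rw [eX]; exact h.e_add _ _ _ _ (h.e_refl _ hx) (h.e_refl _ hx))
  by_contra hno
  -- any part has at least two elements, and not exactly three
  have key : ∀ V W : Multiset ι, {p, p} + {q, q} + {t, t} = V + W → Og V → Og W →
      E V {p, q, t} → E W {p, q, t} → 4 ≤ Multiset.card V := by
    intro V W hVW hV hW e1 e2
    have hV0 : V ≠ 0 := by
      rintro rfl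
      have := h.e_zero _ (h.e_symm _ _ e1)
      simp at this
    have vm : ∀ x ∈ V, x = p ∨ x = q ∨ x = t := by
      intro x hx
      have : x ∈ V + W := Multiset.mem_add.2 (Or.inl hx)
      rw [← hVW] at this
      simp only [Multiset.insert_eq_cons, Multiset.mem_add, Multiset.mem_cons,
        Multiset.mem_singleton] at this
      tauto
    have v2 := two_le (h.og_z _ hV) hV0 (fun x hx => by
      rcases vm x hx with rfl | rfl | rfl <;> assumption)
    by_contra hlt
    have hEVW : E V W := h.e_trans _ _ _ e1 (h.e_symm _ _ e2)
    rcases (show Multiset.card V = 2 ∨ Multiset.card V = 3 by omega) with hc | hc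
    · obtain ⟨a, b, rfl⟩ := Multiset.card_eq_two.1 hc
      have hab := h.pair_class hV
      have can : ∀ a b d : ι, ({p, p} + {q, q} + {t, t} : Multiset ι) =
          {a, a} + ({b, b} + {d, d}) → {p, p} + {q, q} + {t, t} = ({a, a} : Multiset ι) + W →
          W = {b, b} + {d, d} := by
        intro a b d h1 h2
        exact add_left_cancel (h2.symm.trans h1)
      rcases vm a (by simp) with rfl | rfl | rfl <;>
      rcases vm b (by simp) with rfl | rfl | rfl <;> try contradiction
      · have := can b q t (by abel) hVW
        subst this
        exact h.sq_not_equiv _ _ _ ‹_› ‹_› ‹_› ‹_› hEVW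
      · have := can b p t (by abel) hVW
        subst this
        exact h.sq_not_equiv _ _ _ ‹_› ‹_› ‹_› ‹_› hEVW
      · have := can b p q (by abel) hVW
        subst this
        exact h.sq_not_equiv _ _ _ ‹_› ‹_› ‹_› ‹_› hEVW
    · obtain ⟨a, b, d, rfl⟩ := Multiset.card_eq_three.1 hc
      have hz3 : c a * (c b * c d) = 1 := by simpa using h.og_z _ hV
      have n1 : ∀ x y, c x * c x = 1 → c y ≠ 1 → c x * (c x * c y) ≠ 1 := by
        intro x y h1 h2
        rwa [← mul_assoc, h1, one_mul]
      have n2 : ∀ x y, c x * c x = 1 → c y ≠ 1 → c x * (c y * c x) ≠ 1 := by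
        intro x y h1 h2
        rw [mul_comm (c y)]
        exact n1 x y h1 h2
      have n3 : ∀ x y, c x * c x = 1 → c y ≠ 1 → c y * (c x * c x) ≠ 1 := by
        intro x y h1 h2
        rwa [h1, mul_one]
      have rea : ∀ x : Multiset ι, Og x → x = {p, q, t} → False := by
        rintro x hx rfl
        exact hno hx
      rcases vm a (by simp) with rfl | rfl | rfl <;>
      rcases vm b (by simp) with rfl | rfl | rfl <;>
      rcases vm d (by simp) with rfl | rfl | rfl <;>
      first
      | exact n1 _ _ ‹_› ‹_› hz3
      | exact n2 _ _ ‹_› ‹_› hz3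
      | exact n3 _ _ ‹_› ‹_› hz3
      | exact rea _ hV rfl
      | exact rea _ hV (by
          simp only [Multiset.insert_eq_cons, ← Multiset.singleton_add]; abel)
  have k1 := key V W hVW hV hW e1 e2
  have k2 := key W V (by rw [hVW, add_comm]) hW hV e2 e1
  have := congrArg Multiset.card hVW
  simp at this
  omega

/-- nontrivial triples -/
theorem triple_ne (h : TKData c Og E N) (p q t : ι) (hz : c p * c q * c t = 1)
    (hp : c p ≠ 1) (hq : c q ≠ 1) (ht : c t ≠ 1) : Og {p, q, t} := by
  have two : ∀ x y z : G, x * y * z = 1 → x * x = 1 → y * y = 1 → z * z = 1 := by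
    intro x y z h1 h2 h3
    have : z = (x * y)⁻¹ := eq_inv_of_mul_eq_one_right h1
    rw [this, ← mul_inv, mul_mul_mul_comm, h2, h3]; simp
  have z1 : c p * c t * c q = 1 := by rw [← hz]; exact mul_right_comm _ _ _
  have z2 : c q * c t * c p = 1 := by rw [← hz, mul_comm, mul_assoc]
  have z3 : c q * c p * c t = 1 := by rw [← hz, mul_comm (c q)]
  have z4 : c t * c p * c q = 1 := by rw [← z1, mul_comm (c t)]
  by_cases hp2 : c p * c p = 1 <;> by_cases hq2 : c q * c q = 1 <;> by_cases ht2 : c t * c t = 1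
  · exact h.triple_iii p q t hz hp hq ht hp2 hq2 ht2
  · exact absurd (two _ _ _ hz hp2 hq2) ht2
  · exact absurd (two _ _ _ z1 hp2 ht2) hq2
  · exact h.triple_ii p q t hz hp hq ht hp2 hq2 ht2
  · exact absurd (two _ _ _ z2 hq2 ht2) hp2
  · have := h.triple_ii q p t z3 hq hp ht hq2 hp2 ht2
    convert this using 1
    simp only [Multiset.insert_eq_cons, ← Multiset.singleton_add]; abel
  · have := h.triple_ii t p q z4 ht hp hq ht2 hp2 hq2
    convert this using 1
    simp only [Multiset.insert_eq_cons, ← Multiset.singleton_add]; abel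
  · exact h.triple_i p q t hz hp hq ht hp2 hq2 ht2

theorem pair_all (h : TKData c Og E N) (hG : Nat.card G ≠ 2) (p q : ι) (hpq : c p * c q = 1) :
    Og {p, q} := by
  by_cases hp : c p = 1
  · have hq : c q = 1 := by simpa [hp] using hpq
    exact h.og_add _ _ (h.single p hp) (h.single q hq)
  by_cases hp2 : c p * c p = 1
  · have hqp : c q = c p := mul_left_cancel (hpq.trans hp2.symm)
    obtain ⟨g, hg1, hg2⟩ : ∃ g : G, g ≠ 1 ∧ g ≠ c p := by
      by_contra hcon
      push Not at hcon
      apply hG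
      rw [Nat.card_eq_two_iff]
      refine ⟨1, c p, Ne.symm hp, ?_⟩
      ext x
      by_cases hx : x = 1
      · simp [hx]
      · simp [hcon x hx]
    obtain ⟨r, rfl⟩ := h.surj g
    obtain ⟨s, hs⟩ := h.surj (c p * c r)⁻¹
    have hs1 : c s ≠ 1 := by
      rw [hs]
      intro e
      rw [inv_eq_one] at e
      exact hg2 (mul_left_cancel (e.trans hp2.symm))
    have t1 := h.triple_ne p r s (by rw [hs]; simp) hp hg1 hs1
    have t2 := h.triple_ne q r s (by rw [hs, hqp]; simp) (hqp ▸ hp) hg1 hs1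
    have t3 := h.pair p p hp2 hp (Or.inr rfl)
    refine h.og_sub {p, r, s} _ t1 ?_
    have : ({p, r, s} + {p, q} : Multiset ι) = {p, p} + {q, r, s} := by
      simp only [Multiset.insert_eq_cons, ← Multiset.singleton_add]; abel
    rw [this]
    exact h.og_add _ _ t3 t2
  · exact h.pair p q hpq hp (Or.inl hp2)

theorem triple_all (h : TKData c Og E N) (hG : Nat.card G ≠ 2) (p q t : ι)
    (hz : c p * c q * c t = 1) : Og {p, q, t} := by
  by_cases hp : c p = 1
  · have := h.og_add _ _ (h.single p hp) (h.pair_all hG q t (by simpa [hp] using hz))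
    exact this
  by_cases hq : c q = 1
  · have := h.og_add _ _ (h.single q hq) (h.pair_all hG p t (by simpa [hq] using hz))
    convert this using 1
    simp only [Multiset.insert_eq_cons, ← Multiset.singleton_add]; abel
  by_cases ht : c t = 1
  · have := h.og_add _ _ (h.single t ht) (h.pair_all hG p q (by simpa [ht] using hz))
    convert this using 1
    simp only [Multiset.insert_eq_cons, ← Multiset.singleton_add]; abel
  exact h.triple_ne p q t hz hp hq ht

/-- The combinatorial heart: every principal ideal coprime to the conductor is good. -/
theorem main (h : TKData c Og E N) (hG : Nat.card G ≠ 2) (A : Multiset ι)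
    (hA : (A.map c).prod = 1) : Og A := by
  induction hn : Multiset.card A using Nat.strong_induction_on generalizing A with
  | _ n ih =>
  by_cases h0 : A = 0
  · subst h0
    have := h.og_pow 0 hA
    simpa using this
  obtain ⟨p, hp⟩ := Multiset.exists_mem_of_ne_zero h0
  obtain ⟨B, rfl⟩ := Multiset.exists_cons_of_mem hp
  by_cases hB : B = 0
  · subst hB
    exact h.single p (by simpa using hA)
  obtain ⟨q, hq⟩ := Multiset.exists_mem_of_ne_zero hB
  obtain ⟨D, rfl⟩ := Multiset.exists_cons_of_mem hq
  simp only [Multiset.map_cons, Multiset.prod_cons] at hA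
  obtain ⟨t, ht⟩ := h.surj (c p * c q)⁻¹
  obtain ⟨s, hs⟩ := h.surj (c p * c q)
  have a1 := h.triple_all hG p q t (by rw [ht]; simp)
  have a2 := h.pair_all hG t s (by rw [ht, hs]; simp)
  have a3 := ih (Multiset.card (s ::ₘ D)) (by rw [← hn]; simp) (s ::ₘ D)
    (by simp only [Multiset.map_cons, Multiset.prod_cons, hs]; rwa [mul_assoc]) rfl
  refine h.og_sub {t, s} _ a2 ?_
  have : ({t, s} + p ::ₘ q ::ₘ D : Multiset ι) = {p, q, t} + s ::ₘ D := by
    simp only [Multiset.insert_eq_cons, ← Multiset.singleton_add]; abel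
  rw [this]
  exact h.og_add _ _ a1 a3

end TKData
section OrderPart

theorem cond_mem_of {R : Type*} [CommRing R] {O : Subring R} {x : R} (hx : x ∈ O.conductor)
    (r : R) : x * r ∈ O := hx r

theorem cond_le {R : Type*} [CommRing R] {O : Subring R} {x : R} (hx : x ∈ O.conductor) :
    x ∈ O := by
  simpa using cond_mem_of hx 1

theorem exists_exponent {R : Type*} [CommRing R] (f : Ideal R) (hfin : Finite (R ⧸ f)) :
    ∃ N : ℕ, 0 < N ∧ ∀ x : R, IsUnit (Ideal.Quotient.mk f x) → x ^ N - 1 ∈ f := by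
  refine ⟨Nat.card (R ⧸ f)ˣ, Nat.card_pos, ?_⟩
  rintro x ⟨u, hu⟩
  rw [← Ideal.Quotient.eq_zero_iff_mem, map_sub, map_pow, map_one, ← hu, ← Units.val_pow_eq_pow_val,
    pow_card_eq_one']
  simp

theorem div_mem_order {R : Type*} [CommRing R] {O : Subring R} {N : ℕ} (hN : 0 < N) {o y : R}
    (ho : o ∈ O) (hoy : o * y ∈ O) (h : o ^ N - 1 ∈ O.conductor) : y ∈ O := by
  obtain ⟨n, rfl⟩ : ∃ n, N = n + 1 := ⟨N - 1, by omega⟩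
  have : y = o ^ n * (o * y) - (o ^ (n + 1) - 1) * y := by ring
  rw [this]
  exact O.sub_mem (O.mul_mem (O.pow_mem ho _) hoy) (cond_mem_of h y)

theorem exists_local_gen {A : Type*} [CommRing A] [IsDomain A] (F : Ideal A)
    (hfin : Finite (A ⧸ F)) (I J : Ideal A) (d : A) (hd : d ≠ 0) (hIJ : I * J = Ideal.span {d}) :
    ∃ u ∈ I, ∃ j ∈ J, ∃ c, u * j = d * c ∧ 1 - c ∈ F := by
  classical
  have hT : {M : Ideal A | M.IsMaximal ∧ F ≤ M}.Finite := by
    have : Finite (Ideal (A ⧸ F)) := Finite.of_injective (fun I => (I : Set (A ⧸ F)))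
      SetLike.coe_injective
    refine Set.Finite.of_finite_image (f := fun M => M.map (Ideal.Quotient.mk F)) (Set.toFinite _) ?_
    intro M hM M' hM' h
    have h1 := congrArg (Ideal.comap (Ideal.Quotient.mk F)) h
    simp only at h1
    rw [Ideal.comap_map_of_surjective _ Ideal.Quotient.mk_surjective,
      Ideal.comap_map_of_surjective _ Ideal.Quotient.mk_surjective] at h1
    have h2 : Ideal.comap (Ideal.Quotient.mk F) ⊥ = F := by
      rw [← RingHom.ker_eq_comap_bot, Ideal.mk_ker]
    rwa [h2, sup_eq_left.2 hM.2, sup_eq_left.2 hM'.2] at h1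
  set T := hT.toFinset with hTdef
  have hmem : ∀ M, M ∈ T ↔ M.IsMaximal ∧ F ≤ M := by simp [hTdef]
  have key : ∀ i ∈ I, ∀ j ∈ J, ∃ c, i * j = d * c := by
    intro i hi j hj
    have := Ideal.mul_mem_mul hi hj
    rw [hIJ, Ideal.mem_span_singleton] at this
    exact this
  have h1 : ∀ M ∈ T, ∃ i ∈ I, ∃ j ∈ J, ∃ c, i * j = d * c ∧ c ∉ M := by
    intro M hM
    by_contra! hcon
    have hle : I * J ≤ Ideal.span {d} * M := by
      rw [Ideal.mul_le]
      intro i hi j hj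
      obtain ⟨c, hc⟩ := key i hi j hj
      exact Ideal.mem_span_singleton_mul.2 ⟨c, hcon i hi j hj c hc, hc.symm⟩
    rw [hIJ] at hle
    obtain ⟨z, hz, hz'⟩ := Ideal.mem_span_singleton_mul.1 (hle (Ideal.mem_span_singleton_self d))
    have : z = 1 := mul_left_cancel₀ hd (by rw [hz', mul_one])
    subst this
    exact ((hmem M).1 hM).1.ne_top ((Ideal.eq_top_iff_one _).2 hz)
  have h2 : ∀ M ∈ T, ∃ e, e ∉ M ∧ ∀ M' ∈ T, M' ≠ M → e ∈ M' := by
    intro M hM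
    by_contra! hcon
    have hle : (T.erase M).inf id ≤ M := by
      intro e he
      by_contra heM
      obtain ⟨M', a, b, c⟩ := hcon e heM
      have : (T.erase M).inf id ≤ M' := Finset.inf_le (f := id) (Finset.mem_erase.2 ⟨b, a⟩)
      exact c (this he)
    have hMm := ((hmem M).1 hM).1
    obtain ⟨M', hM', hle'⟩ := (Ideal.IsPrime.inf_le' hMm.isPrime).1 hle
    rw [Finset.mem_erase] at hM'
    exact hM'.1 (((hmem M').1 hM'.2).1.eq_of_le hMm.ne_top hle')
  choose! i hi j hj c hc hcM using h1
  choose! e he he' using h2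
  set u := ∑ M ∈ T, e M * i M with hu
  have huI : u ∈ I := Ideal.sum_mem _ fun M hM => I.mul_mem_left _ (hi M hM)
  let C : Ideal A :=
    { carrier := {c | ∃ j ∈ J, u * j = d * c}
      zero_mem' := ⟨0, J.zero_mem, by simp⟩
      add_mem' := by
        rintro a b ⟨j, hj, h⟩ ⟨j', hj', h'⟩
        exact ⟨j + j', J.add_mem hj hj', by rw [mul_add, mul_add, h, h']⟩
      smul_mem' := by
        rintro r a ⟨j, hj, h⟩
        exact ⟨r * j, J.mul_mem_left r hj, by rw [smul_eq_mul, mul_left_comm, h, mul_left_comm]⟩ }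
  have htop : C ⊔ F = ⊤ := by
    by_contra hne
    obtain ⟨M, hM, hle⟩ := Ideal.exists_le_maximal _ hne
    have hMT : M ∈ T := (hmem M).2 ⟨hM, le_sup_right.trans hle⟩
    have h3 : ∀ M' ∈ T, ∃ c', i M' * j M = d * c' := fun M' hM' => key _ (hi M' hM') _ (hj M hMT)
    choose! c' hc' using h3
    have hsum : (∑ M' ∈ T, e M' * c' M') ∈ C := by
      refine ⟨j M, hj M hMT, ?_⟩
      rw [hu, Finset.sum_mul, Finset.mul_sum]
      refine Finset.sum_congr rfl fun M' hM' => ?_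
      rw [mul_assoc, hc' M' hM']; ring
    have hin := (le_sup_left.trans hle) hsum
    rw [← Finset.add_sum_erase _ _ hMT] at hin
    have hrest : ∑ M' ∈ T.erase M, e M' * c' M' ∈ M := Ideal.sum_mem _ fun M' hM' => by
      rw [Finset.mem_erase] at hM'
      exact M.mul_mem_right _ (he' M' hM'.2 M hMT hM'.1.symm)
    have h4 := (Ideal.add_mem_iff_left M hrest).1 hin
    have h5 : c' M = c M := mul_left_cancel₀ hd (by rw [← hc' M hMT, hc M hMT])
    rcases hM.isPrime.mem_or_mem h4 with h6 | h6
    · exact he M hMT h6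
    · exact hcM M hMT (h5 ▸ h6)
  obtain ⟨a, ⟨j₀, hj₀, ha⟩, b, hb, hab⟩ := Submodule.mem_sup.1 ((Ideal.eq_top_iff_one _).1 htop)
  exact ⟨u, huI, j₀, hj₀, a, ha, by rw [← hab]; simpa using hb⟩

theorem principal_of_map_principal {R : Type*} [CommRing R] [IsDomain R] (O : Subring R)
    [Algebra.IsIntegral O R] (hfin : Finite (R ⧸ O.conductor))
    (hgood : ∀ x : R, IsUnit (Ideal.Quotient.mk O.conductor x) → ∃ ε : Rˣ, x * ε ∈ O)
    (I J : Ideal O) (d : O) (hd : d ≠ 0) (hIJ : I * J = Ideal.span {d}) (x : R)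
    (hx : I.map (algebraMap O R) = Ideal.span {x}) : ∃ y, I = Ideal.span {y} := by
  obtain ⟨N, hN, hNf⟩ := exists_exponent _ hfin
  have hinj : Function.Injective (algebraMap O R) := Subtype.val_injective
  have hfin' : Finite (O ⧸ O.conductor.comap (algebraMap O R)) :=
    Finite.of_injective _ (Ideal.quotientMap_injective (I := O.conductor) (f := algebraMap O R))
  obtain ⟨u, hu, j, hj, c, huj, hc⟩ := exists_local_gen _ hfin' I J d hd hIJ
  have hmul : ∀ z ∈ I.map (algebraMap O R), ∀ j ∈ J, ∃ s, z * (j : R) = (d : R) * s := by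
    intro z hz j hj
    have : z * (j : R) ∈ (I * J).map (algebraMap O R) := by
      rw [Ideal.map_mul]
      exact Ideal.mul_mem_mul hz (Ideal.mem_map_of_mem _ hj)
    rw [hIJ, Ideal.map_span, Set.image_singleton, Ideal.mem_span_singleton] at this
    exact this
  have hxI : x ∈ I.map (algebraMap O R) := by rw [hx]; exact Ideal.mem_span_singleton_self x
  have hcondI : ∀ z ∈ I.map (algebraMap O R), ∀ t ∈ O.conductor, ∃ w ∈ I, (w : R) = z * t := by
    intro z hz
    refine Submodule.span_induction
      (p := fun z _ => ∀ t ∈ O.conductor, ∃ w ∈ I, (w : R) = z * t) ?_ ?_ ?_ ?_ hz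
    · rintro _ ⟨w, hw, rfl⟩ t ht
      exact ⟨w * ⟨t, cond_le ht⟩, I.mul_mem_right _ hw, rfl⟩
    · intro t ht
      exact ⟨0, I.zero_mem, by simp⟩
    · rintro a b - - h h' t ht
      obtain ⟨w, hw, h⟩ := h t ht
      obtain ⟨w', hw', h'⟩ := h' t ht
      exact ⟨w + w', I.add_mem hw hw', by push_cast; rw [h, h']; ring⟩
    · rintro r a - h t ht
      obtain ⟨w, hw, h⟩ := h (r * t) (O.conductor.mul_mem_left r ht)
      exact ⟨w, hw, by rw [h, smul_eq_mul]; ring⟩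
  have hd' : (d : R) ≠ 0 := fun h => hd (Subtype.ext h)
  obtain ⟨r, hr⟩ : ∃ r, (u : R) = x * r := by
    have : (u : R) ∈ I.map (algebraMap O R) := Ideal.mem_map_of_mem (algebraMap O R) hu
    rw [hx, Ideal.mem_span_singleton] at this
    exact this
  obtain ⟨s, hs⟩ := hmul x hxI j hj
  have hcrs : (c : R) = r * s := by
    apply mul_left_cancel₀ hd'
    have h1 : (u : R) * j = d * c := by exact_mod_cast congrArg (Subtype.val) huj
    rw [← h1, hr, mul_right_comm, hs]; ring
  have hrunit : IsUnit (Ideal.Quotient.mk O.conductor r) := by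
    refine IsUnit.of_mul_eq_one (Ideal.Quotient.mk O.conductor s) ?_
    rw [← map_mul, ← hcrs, ← map_one (Ideal.Quotient.mk O.conductor), eq_comm, Ideal.Quotient.eq]
    exact hc
  obtain ⟨ε, hε⟩ := hgood r hrunit
  have hounit : IsUnit (Ideal.Quotient.mk O.conductor (r * ε)) := by
    rw [map_mul]
    exact hrunit.mul (ε.isUnit.map _)
  have hoN := hNf _ hounit
  set x' := x * (ε⁻¹ : Rˣ) with hx'
  have hx'I : x' ∈ I.map (algebraMap O R) := Ideal.mul_mem_right _ _ hxI
  have hspan : Ideal.span {x'} = Ideal.span {x} :=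
    Ideal.span_singleton_mul_right_unit (ε⁻¹).isUnit x
  have hux' : (u : R) = x' * (r * ε) := by
    rw [hr, hx', mul_assoc, mul_left_comm _ r, Units.inv_mul, mul_one]
  obtain ⟨n, rfl⟩ : ∃ n, N = n + 1 := ⟨N - 1, by omega⟩
  obtain ⟨w, hw, hwx⟩ := hcondI x' hx'I _ hoN
  obtain ⟨y, hyI, hy⟩ : ∃ y ∈ I, (y : R) = x' := by
    refine ⟨u * ⟨r * ε, hε⟩ ^ n - w, I.sub_mem (I.mul_mem_right _ hu) hw, ?_⟩
    push_cast
    rw [hwx, hux']; ring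
  refine ⟨y, ?_⟩
  let C : Ideal O :=
    { carrier := {c | ∃ j ∈ J, y * j = d * c}
      zero_mem' := ⟨0, J.zero_mem, by simp⟩
      add_mem' := by
        rintro a b ⟨j, hj, h⟩ ⟨j', hj', h'⟩
        exact ⟨j + j', J.add_mem hj hj', by rw [mul_add, mul_add, h, h']⟩
      smul_mem' := by
        rintro r a ⟨j, hj, h⟩
        exact ⟨r * j, J.mul_mem_left r hj, by rw [smul_eq_mul, mul_left_comm, h, mul_left_comm]⟩ }
  have hC1 : Ideal.span {d} * C = Ideal.span {y} * J := by
    ext z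
    rw [Ideal.mem_span_singleton_mul, Ideal.mem_span_singleton_mul]
    constructor
    · rintro ⟨c, ⟨j, hj, h⟩, rfl⟩
      exact ⟨j, hj, h⟩
    · rintro ⟨j, hj, rfl⟩
      have := Ideal.mul_mem_mul hyI hj
      rw [hIJ, Ideal.mem_span_singleton] at this
      obtain ⟨c, hc⟩ := this
      exact ⟨c, ⟨j, hj, hc⟩, hc.symm⟩
  have hC2 : I * C = Ideal.span {y} := by
    have : Ideal.span {d} * (I * C) = Ideal.span {d} * Ideal.span {y} := by
      rw [mul_left_comm, hC1, mul_left_comm, hIJ, mul_comm]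
    exact (Ideal.span_singleton_mul_right_inj hd).1 this
  have hymap : (Ideal.span {y}).map (algebraMap O R) = Ideal.span {x} := by
    rw [Ideal.map_span, Set.image_singleton, ← hspan, ← hy]
    rfl
  have hC3 : C.map (algebraMap O R) = ⊤ := by
    have h1 := congrArg (Ideal.map (algebraMap O R)) hC2
    rw [Ideal.map_mul, hymap, hx] at h1
    have hx0 : x ≠ 0 := by
      rintro rfl
      have h2 : I = ⊥ := by
        rw [← Ideal.map_eq_bot_iff_of_injective hinj, hx]; simp
      rw [h2, Ideal.bot_mul] at hIJ
      exact hd (Ideal.span_singleton_eq_bot.1 hIJ.symm)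
    refine (Ideal.span_singleton_mul_right_inj hx0).1 ?_
    rw [h1, Ideal.mul_top]
  have hC4 : C = ⊤ := (Ideal.map_eq_top_iff _ hinj (Algebra.IsIntegral.isIntegral)).1 hC3
  rw [← hC2, hC4, Ideal.mul_top]


theorem class_rep {A : Type*} [CommRing A] [IsDomain A] (C : ClassGroup A) :
    ∃ (U : (FractionalIdeal A⁰ (FractionRing A))ˣ) (I J : Ideal A) (d : A), d ≠ 0 ∧
      (U : FractionalIdeal A⁰ (FractionRing A)) = I ∧ I * J = Ideal.span {d} ∧
      ClassGroup.mk (FractionRing A) U = C := by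
  obtain ⟨V, rfl⟩ : ∃ V, ClassGroup.mk (FractionRing A) V = C := by
    obtain ⟨V, rfl⟩ := Quot.exists_rep C
    exact ⟨V, (ClassGroup.Quot_mk_eq_mk V).symm⟩
  have hden0 : ∀ I : FractionalIdeal A⁰ (FractionRing A),
      algebraMap A (FractionRing A) I.den ≠ 0 := fun I =>
    IsFractionRing.to_map_ne_zero_of_mem_nonZeroDivisors I.den.prop
  have h1 : IsUnit (V.1.num : FractionalIdeal A⁰ (FractionRing A)) :=
    FractionalIdeal.isUnit_num.2 V.isUnit
  obtain ⟨U, hU⟩ := h1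
  have h2 := FractionalIdeal.den_mul_self_eq_num' A⁰ (FractionRing A) V.1
  have h3 := FractionalIdeal.den_mul_self_eq_num' A⁰ (FractionRing A) (V⁻¹).1
  refine ⟨U, V.1.num, (V⁻¹).1.num, V.1.den * (V⁻¹).1.den, ?_, hU, ?_, ?_⟩
  · exact mul_ne_zero (nonZeroDivisors.coe_ne_zero _) (nonZeroDivisors.coe_ne_zero _)
  · apply FractionalIdeal.coeIdeal_injective (K := FractionRing A)
    simp only
    rw [FractionalIdeal.coeIdeal_mul, ← h2, ← h3, FractionalIdeal.coeIdeal_span_singleton,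
      mul_mul_mul_comm, Units.mul_inv, mul_one, FractionalIdeal.spanSingleton_mul_spanSingleton,
      map_mul]
  · rw [eq_comm, ClassGroup.mk_eq_mk]
    refine ⟨Units.mk0 (algebraMap A _ V.1.den) (hden0 _), ?_⟩
    apply Units.ext
    rw [mul_comm, Units.val_mul, coe_toPrincipalIdeal, Units.val_mk0, hU]
    exact h2

theorem extended_inj {R : Type*} [CommRing R] [IsDomain R] (O : Subring R)
    [Algebra.IsIntegral O R] (hfin : Finite (R ⧸ O.conductor))
    (hgood : ∀ x : R, IsUnit (Ideal.Quotient.mk O.conductor x) → ∃ ε : Rˣ, x * ε ∈ O) :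
    Function.Injective (ClassGroup.extendedHom O R) := by
  rw [injective_iff_map_eq_one]
  intro C hC
  obtain ⟨U, I, J, d, hd, hU, hIJ, rfl⟩ := class_rep C
  rw [ClassGroup.extendedHom_mk, ClassGroup.mk_eq_one_of_coe_ideal
    (I' := I.map (algebraMap O R))] at hC
  · obtain ⟨x, -, hx⟩ := hC
    obtain ⟨y, hy⟩ := principal_of_map_principal O hfin hgood I J d hd hIJ x hx
    rw [ClassGroup.mk_eq_one_of_coe_ideal hU]
    refine ⟨y, ?_, hy⟩
    rintro rfl
    rw [hy] at hIJ
    apply hd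
    rw [← Ideal.span_singleton_eq_bot, ← hIJ]
    simp
  · have := FractionalIdeal.extendedHom_coeIdeal_eq_map (L := FractionRing R) (B := R)
      (K := FractionRing O) I
    rw [← this, ← hU]
    rfl

theorem isUnit_mk_of_sup {R : Type*} [CommRing R] {f : Ideal R} {x : R}
    (h : Ideal.span {x} ⊔ f = ⊤) : IsUnit (Ideal.Quotient.mk f x) := by
  obtain ⟨a, ha, b, hb, hab⟩ := Submodule.mem_sup.1 ((Ideal.eq_top_iff_one _).1 h)
  obtain ⟨r, rfl⟩ := Ideal.mem_span_singleton.1 ha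
  refine IsUnit.of_mul_eq_one (Ideal.Quotient.mk f r) ?_
  rw [← map_mul, ← map_one (Ideal.Quotient.mk f), eq_comm, Ideal.Quotient.eq, ← hab]
  simpa using hb

theorem exists_mem_comap {R : Type*} [CommRing R] {O : Subring R} {A : Ideal R}
    (hA : A ⊔ O.conductor = ⊤) :
    ∃ a : O, (a : R) ∈ A ∧ 1 - (a : R) ∈ O.conductor := by
  obtain ⟨a, ha, b, hb, hab⟩ := Submodule.mem_sup.1 ((Ideal.eq_top_iff_one _).1 hA)
  have : a = 1 - b := by rw [← hab]; ring
  refine ⟨⟨a, by rw [this]; exact O.sub_mem O.one_mem (cond_le hb)⟩, ha, ?_⟩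
  simpa [this] using hb

theorem map_comap_coprime {R : Type*} [CommRing R] {O : Subring R} {A : Ideal R}
    (hA : A ⊔ O.conductor = ⊤) :
    (A.comap (algebraMap O R)).map (algebraMap O R) = A := by
  refine le_antisymm Ideal.map_comap_le ?_
  intro x hx
  obtain ⟨a, ha, hb⟩ := exists_mem_comap hA
  have h1 : x * (1 - (a : R)) ∈ O := by rw [mul_comm]; exact cond_mem_of hb x
  have h2 : x = x * (a : R) + x * (1 - (a : R)) := by ring
  rw [h2]
  refine Ideal.add_mem _ (Ideal.mul_mem_left _ _ ?_) ?_
  · exact Ideal.mem_map_of_mem (algebraMap O R) (x := a) ha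
  · exact Ideal.mem_map_of_mem (algebraMap O R) (x := ⟨_, h1⟩)
      (I := A.comap (algebraMap O R)) (A.mul_mem_right _ hx)

theorem comap_mul_coprime {R : Type*} [CommRing R] {O : Subring R} {A B : Ideal R}
    (hA : A ⊔ O.conductor = ⊤) (hB : B ⊔ O.conductor = ⊤) :
    A.comap (algebraMap O R) * B.comap (algebraMap O R) = (A * B).comap (algebraMap O R) := by
  refine le_antisymm ?_ ?_
  · rw [Ideal.mul_le]
    intro a ha b hb
    rw [Ideal.mem_comap, map_mul]
    exact Ideal.mul_mem_mul ha hb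
  intro z hz
  obtain ⟨a, ha, ha'⟩ := exists_mem_comap hA
  obtain ⟨b, hb, hb'⟩ := exists_mem_comap hB
  have ht : 1 - (a : R) * b ∈ O.conductor := by
    have : 1 - (a : R) * b = (1 - (a : R)) + a * (1 - (b : R)) := by ring
    rw [this]
    exact Ideal.add_mem _ ha' (Ideal.mul_mem_left _ _ hb')
  set t := 1 - (a : R) * b with htd
  have key : ∀ z ∈ A * B, ∃ w ∈ A.comap (algebraMap O R) * B.comap (algebraMap O R),
      (w : R) = z * t ^ 2 := by
    intro z hz
    refine Submodule.mul_induction_on hz ?_ ?_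
    · intro x hx y hy
      have hx' : x * t ∈ O := by rw [mul_comm]; exact cond_mem_of ht x
      have hy' : y * t ∈ O := by rw [mul_comm]; exact cond_mem_of ht y
      refine ⟨⟨x * t, hx'⟩ * ⟨y * t, hy'⟩, Ideal.mul_mem_mul ?_ ?_, ?_⟩
      · exact A.mul_mem_right _ hx
      · exact B.mul_mem_right _ hy
      · push_cast; ring
    · rintro x y ⟨w, hw, h⟩ ⟨w', hw', h'⟩
      exact ⟨w + w', Ideal.add_mem _ hw hw', by push_cast; rw [h, h']; ring⟩
  obtain ⟨w, hw, hwz⟩ := key z hz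
  have h1 : z = (z * a * (a * b + ((1 - a * b) + (1 - a * b)))) * b + w := by
    apply Subtype.ext
    push_cast
    rw [hwz, htd]; ring
  rw [h1]
  refine Ideal.add_mem _ (Ideal.mul_mem_mul ?_ hb) hw
  rw [mul_comm z a, mul_assoc]
  exact Ideal.mul_mem_right _ _ (show a ∈ A.comap (algebraMap O R) from ha)

theorem extended_surj {R : Type*} [CommRing R] [IsDomain R] [IsDedekindDomain R] (O : Subring R)
    (hfin : Finite (R ⧸ O.conductor))
    (htor : ∀ c : ClassGroup R, ∃ n : ℕ, 0 < n ∧ c ^ n = 1)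
    (hcls : ∀ c : ClassGroup R, ∃ (P : Ideal R) (hP : P ∈ (Ideal R)⁰),
      P.IsPrime ∧ ¬ O.conductor ≤ P ∧ ClassGroup.mk0 ⟨P, hP⟩ = c) :
    Function.Surjective (ClassGroup.extendedHom O R) := by
  intro C
  obtain ⟨P, hP0, hP, hPf, rfl⟩ := hcls C
  obtain ⟨n, hn, hpow⟩ := htor (ClassGroup.mk0 ⟨P, hP0⟩)
  obtain ⟨N, hN, hNf⟩ := exists_exponent _ hfin
  have hPne : P ≠ ⊥ := nonZeroDivisors.ne_zero hP0
  have hPmax : P.IsMaximal := hP.isMaximal hPne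
  have hcop : ∀ k, P ^ k ⊔ O.conductor = ⊤ := by
    intro k
    have : P ⊔ O.conductor = ⊤ := by
      by_contra h
      exact hPf (le_sup_right.trans (hPmax.eq_of_le h le_sup_left).ge)
    rw [← Ideal.isCoprime_iff_sup_eq] at this ⊢
    exact this.pow_left
  rw [← map_pow, ClassGroup.mk0_eq_one_iff] at hpow
  obtain ⟨x, hx⟩ := hpow.principal
  replace hx : P ^ n = Ideal.span {x} := hx
  have hxu : IsUnit (Ideal.Quotient.mk O.conductor x) := isUnit_mk_of_sup (by rw [← hx]; exact hcop n)
  have hxN := hNf x hxu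
  have ho : x ^ N ∈ O := by
    have := O.add_mem (cond_le hxN) O.one_mem
    simpa using this
  have hoN : (x ^ N) ^ N - 1 ∈ O.conductor := hNf _ (by rw [map_pow]; exact hxu.pow N)
  have hx0 : x ≠ 0 := by
    rintro rfl
    rw [Ideal.span_singleton_eq_bot.2 rfl] at hx
    exact hPne (pow_eq_zero_iff (hn.ne')|>.1 hx)
  obtain ⟨m, hm⟩ : ∃ m, n * N = m + 1 := ⟨n * N - 1, by have := Nat.mul_pos hn hN; omega⟩
  have hIJ : P.comap (algebraMap O R) * (P ^ m).comap (algebraMap O R) =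
      Ideal.span {(⟨x ^ N, ho⟩ : O)} := by
    rw [comap_mul_coprime (by simpa using hcop 1) (hcop m), ← pow_succ', ← hm, pow_mul, hx,
      Ideal.span_singleton_pow]
    ext z
    rw [Ideal.mem_comap, Ideal.mem_span_singleton, Ideal.mem_span_singleton]
    constructor
    · rintro ⟨r, hr⟩
      have hr' : (z : R) = x ^ N * r := hr
      have : r ∈ O := div_mem_order hN ho (by rw [← hr']; exact z.2) hoN
      exact ⟨⟨r, this⟩, Subtype.ext hr⟩
    · rintro ⟨r, rfl⟩
      exact ⟨r, rfl⟩
  have hd : (⟨x ^ N, ho⟩ : O) ≠ 0 := fun h => pow_ne_zero N hx0 (congrArg Subtype.val h)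
  obtain ⟨U, hU⟩ : IsUnit ((P.comap (algebraMap O R) : Ideal O) :
      FractionalIdeal O⁰ (FractionRing O)) := by
    refine isUnit_of_mul_isUnit_left (y := (((P ^ m).comap (algebraMap O R) : Ideal O) :
      FractionalIdeal O⁰ (FractionRing O))) ?_
    rw [← FractionalIdeal.coeIdeal_mul, hIJ, FractionalIdeal.coeIdeal_span_singleton]
    have hne : algebraMap O (FractionRing O) ⟨x ^ N, ho⟩ ≠ 0 := by
      rwa [Ne, IsFractionRing.to_map_eq_zero_iff]
    exact ⟨toPrincipalIdeal O (FractionRing O) (Units.mk0 _ hne), by simp⟩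
  refine ⟨ClassGroup.mk _ U, ?_⟩
  rw [ClassGroup.extendedHom_mk, ← ClassGroup.mk_mk0 (FractionRing R)]
  congr 1
  apply Units.ext
  have := FractionalIdeal.extendedHom_coeIdeal_eq_map (L := FractionRing R) (B := R)
      (K := FractionRing O) (P.comap (algebraMap O R))
  rw [map_comap_coprime (by simpa using hcop 1), ← hU] at this
  exact this

end OrderPart

section RegularPrimes

variable {R : Type*} [CommRing R] [IsDedekindDomain R]

/-- Nonzero primes of `R` not containing the conductor. -/
abbrev RegPrime (O : Subring R) : Type _ :=
  {P : Ideal R // P.IsPrime ∧ P ∈ (Ideal R)⁰ ∧ ¬ O.conductor ≤ P}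

/-- The class of a regular prime. -/
noncomputable def regCls (O : Subring R) (P : RegPrime O) : ClassGroup R :=
  ClassGroup.mk0 ⟨P.1, P.2.2.1⟩

/-- The product of a multiset of regular primes. -/
noncomputable def regProd (O : Subring R) (A : Multiset (RegPrime O)) : Ideal R :=
  (A.map Subtype.val).prod

variable {O : Subring R}

theorem regProd_add (A B : Multiset (RegPrime O)) :
    regProd O (A + B) = regProd O A * regProd O B := by
  simp [regProd]

theorem regProd_zero : regProd O 0 = ⊤ := by
  simp [regProd, Ideal.one_eq_top]

theorem regProd_nsmul (n : ℕ) (A : Multiset (RegPrime O)) :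
    regProd O (n • A) = regProd O A ^ n := by
  simp [regProd, Multiset.map_nsmul, Multiset.prod_nsmul]

theorem regProd_cop (A : Multiset (RegPrime O)) : regProd O A ⊔ O.conductor = ⊤ := by
  induction A using Multiset.induction_on with
  | empty => simp [regProd_zero]
  | cons P A ih =>
    have hP : P.1 ⊔ O.conductor = ⊤ := by
      by_contra h
      have hmax : P.1.IsMaximal := P.2.1.isMaximal (nonZeroDivisors.ne_zero P.2.2.1)
      exact P.2.2.2 (le_sup_right.trans (hmax.eq_of_le h le_sup_left).ge)
    have h1 : regProd O (P ::ₘ A) = P.1 * regProd O A := by simp [regProd]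
    rw [h1]
    rw [← Ideal.isCoprime_iff_sup_eq] at *
    exact hP.mul_left ih

theorem regProd_cls (A : Multiset (RegPrime O)) :
    (A.map (regCls O)).prod = 1 ↔ ∃ x, x ≠ 0 ∧ regProd O A = Ideal.span {x} := by
  have h1 : (A.map (regCls O)).prod =
      ClassGroup.mk0 (A.map (fun P : RegPrime O => (⟨P.1, P.2.2.1⟩ : (Ideal R)⁰))).prod := by
    rw [map_multiset_prod, Multiset.map_map]
    rfl
  have h2 : ((A.map (fun P : RegPrime O => (⟨P.1, P.2.2.1⟩ : (Ideal R)⁰))).prod : Ideal R) =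
      regProd O A := by
    rw [Submonoid.coe_multiset_prod, Multiset.map_map]
    rfl
  have h3 := (A.map (fun P : RegPrime O => (⟨P.1, P.2.2.1⟩ : (Ideal R)⁰))).prod.2
  rw [h1, ← ClassGroup.mk_mk0 (FractionRing R), ClassGroup.mk_eq_one_of_coe_ideal
    (I' := regProd O A)]
  rw [← h2]
  rfl

theorem regProd_inj {A B : Multiset (RegPrime O)} (h : regProd O A = regProd O B) : A = B := by
  have hp : ∀ A : Multiset (RegPrime O), ∀ x ∈ A.map Subtype.val, Prime x := by
    intro A x hx
    obtain ⟨P, -, rfl⟩ := Multiset.mem_map.1 hx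
    exact Ideal.prime_of_isPrime (nonZeroDivisors.ne_zero P.2.2.1) P.2.1
  have := prime_factors_unique (hp A) (hp B) (by
    have : (A.map Subtype.val).prod = (B.map Subtype.val).prod := h
    rw [this]; exact Associated.refl _)
  rw [associated_eq_eq, Multiset.rel_eq] at this
  exact Multiset.map_injective Subtype.val_injective this

theorem exists_regProd {I : Ideal R} (hI : I ≠ ⊥) (hcop : I ⊔ O.conductor = ⊤) :
    ∃ A, regProd O A = I := by
  obtain ⟨s, hs, hprod⟩ := UniqueFactorizationMonoid.exists_prime_factors I hI
  rw [associated_iff_eq] at hprod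
  have : ∀ P ∈ s, P.IsPrime ∧ P ∈ (Ideal R)⁰ ∧ ¬ O.conductor ≤ P := by
    intro P hP
    have hPp := Ideal.isPrime_of_prime (hs P hP)
    refine ⟨hPp, mem_nonZeroDivisors_of_ne_zero (hs P hP).ne_zero, fun h => ?_⟩
    have h1 : I ≤ P := Ideal.le_of_dvd (hprod ▸ Multiset.dvd_prod hP)
    exact hPp.ne_top (top_le_iff.1 (hcop ▸ sup_le h1 h))
  lift s to Multiset (RegPrime O) using this
  exact ⟨s, hprod⟩

theorem regProd_split {X : Multiset (RegPrime O)} {v w : R} (hvw : v * w ≠ 0)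
    (h : regProd O X = Ideal.span {v * w}) :
    ∃ V W, X = V + W ∧ regProd O V = Ideal.span {v} ∧ regProd O W = Ideal.span {w} := by
  have hc := regProd_cop X
  rw [h] at hc
  obtain ⟨V, hV⟩ := exists_regProd (O := O) (I := Ideal.span {v})
    (by simpa using left_ne_zero_of_mul hvw)
    (top_le_iff.1 (hc.ge.trans (sup_le_sup_right
      (Ideal.span_singleton_le_span_singleton.2 (Dvd.intro _ rfl)) _)))
  obtain ⟨W, hW⟩ := exists_regProd (O := O) (I := Ideal.span {w})
    (by simpa using right_ne_zero_of_mul hvw)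
    (top_le_iff.1 (hc.ge.trans (sup_le_sup_right
      (Ideal.span_singleton_le_span_singleton.2 (Dvd.intro_left _ rfl)) _)))
  refine ⟨V, W, regProd_inj ?_, hV, hW⟩
  rw [regProd_add, h, hV, hW, Ideal.span_singleton_mul_span_singleton]

theorem ne_zero_of_regProd {A : Multiset (RegPrime O)} {x : R} (h : regProd O A = Ideal.span {x}) :
    x ≠ 0 := by
  rintro rfl
  have : (0 : Ideal R) ∉ A.map Subtype.val := by
    intro h0
    obtain ⟨P, -, hP⟩ := Multiset.mem_map.1 h0
    exact nonZeroDivisors.ne_zero P.2.2.1 hP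
  apply this
  rw [← Multiset.prod_eq_zero_iff]
  exact h.trans (by simp)

end RegularPrimes

section AssocPart

variable {K : Type*} [CommRing K] {H : Submonoid K}

theorem AssocIn.rfl' (x : K) : AssocIn H x x := ⟨1, H.one_mem, ⟨1, H.one_mem, by simp⟩, by simp⟩

theorem AssocIn.symm' {x y : K} (h : AssocIn H x y) : AssocIn H y x := by
  obtain ⟨e, he, ⟨e', he', hee⟩, rfl⟩ := h
  exact ⟨e', he', ⟨e, he, by rw [mul_comm, hee]⟩, by rw [mul_assoc, hee, mul_one]⟩

theorem AssocIn.trans' {x y z : K} (h : AssocIn H x y) (h' : AssocIn H y z) : AssocIn H x z := by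
  obtain ⟨e, he, ⟨e', he', hee⟩, rfl⟩ := h
  obtain ⟨d, hd, ⟨d', hd', hdd⟩, rfl⟩ := h'
  refine ⟨d * e, H.mul_mem hd he, ⟨d' * e', H.mul_mem hd' he', ?_⟩, by ring⟩
  rw [mul_mul_mul_comm, hee, hdd, one_mul]

theorem AssocIn.mul' {x y z w : K} (h : AssocIn H x y) (h' : AssocIn H z w) :
    AssocIn H (x * z) (y * w) := by
  obtain ⟨e, he, ⟨e', he', hee⟩, rfl⟩ := h
  obtain ⟨d, hd, ⟨d', hd', hdd⟩, rfl⟩ := h'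
  refine ⟨d * e, H.mul_mem hd he, ⟨d' * e', H.mul_mem hd' he', ?_⟩, by ring⟩
  rw [mul_mul_mul_comm, hee, hdd, one_mul]

end AssocPart

section Build

variable {R : Type*} [CommRing R] [IsDomain R] [IsDedekindDomain R] {O : Subring R}

theorem exists_cond_ne_zero (hfg : Module.Finite ↥O R)
    (hfrac : ∀ r : R, ∃ a b : ↥O, (b : R) ≠ 0 ∧ (b : R) * r = (a : R)) :
    ∃ s ∈ O.conductor, s ≠ 0 := by
  classical
  obtain ⟨S, hS⟩ := hfg.fg_top
  choose a b hb hab using hfrac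
  refine ⟨((∏ r ∈ S, b r : O) : R), ?_, ?_⟩
  · intro r
    have hr : r ∈ Submodule.span O (S : Set R) := by rw [hS]; trivial
    refine Submodule.span_induction (p := fun r _ => ((∏ r ∈ S, b r : O) : R) * r ∈ O)
      ?_ ?_ ?_ ?_ hr
    · intro r hr
      rw [← Finset.prod_erase_mul _ _ hr]
      push_cast
      rw [mul_assoc, hab]
      exact O.mul_mem (by exact_mod_cast (∏ r ∈ S.erase r, b r : O).2) (a r).2
    · simpa using O.zero_mem
    · intro x y _ _ hx hy
      rw [mul_add]; exact O.add_mem hx hy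
    · intro c x _ hx
      have : c • x = (c : R) * x := rfl
      rw [this, mul_left_comm]
      exact O.mul_mem c.2 hx
  · push_cast
    exact Finset.prod_ne_zero_iff.2 fun r _ => hb r

theorem ring_le_krull {H : Submonoid (FractionRing R)} (hH : IsTKOvermonoid O H)
    (hfrac : ∀ r : R, ∃ a b : ↥O, (b : R) ≠ 0 ∧ (b : R) * r = (a : R))
    {s : R} (hs : s ∈ O.conductor) (hs0 : s ≠ 0) {r : R} (hr : r ≠ 0) :
    algebraMap R (FractionRing R) r ∈ H := by
  obtain ⟨ι, d, hd⟩ := hH.krull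
  obtain ⟨⟨a, ha⟩, ⟨b, hb⟩, hb0, hab⟩ := hfrac r
  simp only at hb0 hab
  have ha0 : a ≠ 0 := by rw [← hab]; exact mul_ne_zero hb0 hr
  set a' : H := ⟨algebraMap R (FractionRing R) a, hH.incl a ha ha0⟩ with ha'
  set b' : H := ⟨algebraMap R (FractionRing R) b, hH.incl b hb hb0⟩ with hb'
  set s' : H := ⟨algebraMap R (FractionRing R) s, hH.incl s (cond_le hs) hs0⟩ with hs'
  have h1 : ∀ n : ℕ, ∃ t : H, b' ^ n * t = s' * a' ^ n := by
    intro n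
    refine ⟨⟨algebraMap R (FractionRing R) (s * r ^ n),
      hH.incl _ (cond_mem_of hs _) (mul_ne_zero hs0 (pow_ne_zero n hr))⟩, ?_⟩
    apply Subtype.ext
    simp only [Submonoid.coe_mul, SubmonoidClass.coe_pow, ha', hb', hs', ← map_pow, ← map_mul]
    congr 1
    rw [← hab]; ring
  have h2 : d b' ∣ d a' := by
    have hle : Multiplicative.toAdd (d b') ≤ Multiplicative.toAdd (d a') := by
      intro i
      obtain ⟨t, ht⟩ := h1 (Multiplicative.toAdd (d s') i + 1)
      have h3 := congrArg (fun z => Multiplicative.toAdd (d z) i) ht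
      simp only [map_mul, map_pow, toAdd_mul, toAdd_pow, Finsupp.add_apply, Finsupp.smul_apply,
        smul_eq_mul] at h3
      by_contra hlt
      push Not at hlt
      nlinarith [Nat.zero_le (Multiplicative.toAdd (d t) i)]
    refine ⟨Multiplicative.ofAdd (Multiplicative.toAdd (d a') - Multiplicative.toAdd (d b')), ?_⟩
    apply Multiplicative.toAdd.injective
    rw [toAdd_mul, toAdd_ofAdd]
    exact (add_tsub_cancel_of_le hle).symm
  obtain ⟨h, hh⟩ := hd _ _ h2
  have h4 := congrArg Subtype.val hh
  simp only [Submonoid.coe_mul, ha', hb'] at h4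
  rw [← hab, map_mul] at h4
  have hb1 : algebraMap R (FractionRing R) b ≠ 0 := hH.nonzero _ (hH.incl b hb hb0)
  rw [mul_left_cancel₀ hb1 h4]
  exact h.2

set_option maxHeartbeats 1000000 in
theorem tkdata_of {H : Submonoid (FractionRing R)} (hH : IsTKOvermonoid O H)
    (hRH : ∀ r : R, r ≠ 0 → algebraMap R (FractionRing R) r ∈ H)
    (hcls : ∀ c : ClassGroup R, ∃ (P : Ideal R) (hP : P ∈ (Ideal R)⁰),
      P.IsPrime ∧ ¬ O.conductor ≤ P ∧ ClassGroup.mk0 ⟨P, hP⟩ = c)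
    {N : ℕ} (hN : 0 < N)
    (hNf : ∀ x : R, IsUnit (Ideal.Quotient.mk O.conductor x) → x ^ N - 1 ∈ O.conductor) :
    TKData (regCls O) (fun A => ∃ o ∈ O, regProd O A = Ideal.span {o})
      (fun A B => ∃ x y, regProd O A = Ideal.span {x} ∧ regProd O B = Ideal.span {y} ∧
        AssocIn H (algebraMap R (FractionRing R) x) (algebraMap R (FractionRing R) y)) N := by
  have hunit : ∀ {A : Multiset (RegPrime O)} {x : R}, regProd O A = Ideal.span {x} →
      IsUnit (Ideal.Quotient.mk O.conductor x) := fun {A x} h =>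
    isUnit_mk_of_sup (by rw [← h]; exact regProd_cop A)
  have hpow : ∀ {A : Multiset (RegPrime O)} {x : R}, regProd O A = Ideal.span {x} →
      x ^ N ∈ O := fun {A x} h => by
    simpa using O.add_mem (cond_le (hNf x (hunit h))) O.one_mem
  have hass : ∀ {x y : R}, Ideal.span {x} = Ideal.span {y} →
      AssocIn H (algebraMap R (FractionRing R) x) (algebraMap R (FractionRing R) y) := by
    intro x y h
    obtain ⟨u, hu⟩ := (Ideal.span_singleton_eq_span_singleton.1 h).symm
    refine ⟨algebraMap R _ (u : R), hRH _ u.ne_zero, ⟨algebraMap R _ ((u⁻¹ : Rˣ) : R),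
      hRH _ (u⁻¹).ne_zero, ?_⟩, ?_⟩
    · rw [← map_mul, Units.mul_inv, map_one]
    · rw [← map_mul, hu]
  refine ⟨?_, hN, ?_, ?_, ?_, ?_, ?_, ?_, ?_, ?_, ?_, ?_⟩
  · intro g
    obtain ⟨P, hP, h1, h2, h3⟩ := hcls g
    exact ⟨⟨P, h1, hP, h2⟩, h3⟩
  · rintro A ⟨o, -, h⟩
    exact (regProd_cls A).2 ⟨o, ne_zero_of_regProd h, h⟩
  · rintro A B ⟨o, ho, h⟩ ⟨o', ho', h'⟩
    exact ⟨o * o', O.mul_mem ho ho', by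
      rw [regProd_add, h, h', Ideal.span_singleton_mul_span_singleton]⟩
  · rintro A B ⟨o, ho, h⟩ ⟨o', ho', h'⟩
    have h0 := ne_zero_of_regProd h
    obtain ⟨y, hy⟩ : ∃ y, o' = o * y := by
      have : o' ∈ regProd O A := by
        have h1 : o' ∈ regProd O (A + B) := by rw [h']; exact Ideal.mem_span_singleton_self _
        rw [regProd_add] at h1
        have h2 : regProd O A * regProd O B ≤ regProd O A := Ideal.mul_le_left
        exact h2 h1
      rw [h] at this
      exact Ideal.mem_span_singleton.1 this
    refine ⟨y, div_mem_order hN ho (hy ▸ ho') (hNf _ (hunit h)), ?_⟩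
    rw [regProd_add, h, hy, ← Ideal.span_singleton_mul_span_singleton] at h'
    exact (Ideal.span_singleton_mul_right_inj h0).1 h'
  · intro A hA
    obtain ⟨x, -, hx⟩ := (regProd_cls A).1 hA
    exact ⟨x, x, hx, hx, AssocIn.rfl' _⟩
  · rintro A B ⟨x, y, hx, hy, h⟩
    exact ⟨y, x, hy, hx, h.symm'⟩
  · rintro A B C ⟨x, y, hx, hy, h⟩ ⟨y', z, hy', hz, h'⟩
    exact ⟨x, z, hx, hz, (h.trans' (hass (hy.symm.trans hy'))).trans' h'⟩
  · rintro A B C D ⟨x, y, hx, hy, h⟩ ⟨x', y', hx', hy', h'⟩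
    refine ⟨x * x', y * y', ?_, ?_, ?_⟩
    · rw [regProd_add, hx, hx', Ideal.span_singleton_mul_span_singleton]
    · rw [regProd_add, hy, hy', Ideal.span_singleton_mul_span_singleton]
    · rw [map_mul, map_mul]; exact h.mul' h'
  · rintro X Y₁ Y₂ h1 h2 ⟨o, ho, hX⟩ ⟨x, y, hx, hy, h⟩
    obtain ⟨y₁, hy₁0, hy₁⟩ := (regProd_cls Y₁).1 h1
    obtain ⟨y₂, hy₂0, hy₂⟩ := (regProd_cls Y₂).1 h2
    have h3 : AssocIn H (algebraMap R (FractionRing R) o)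
        (algebraMap R (FractionRing R) (y₁ * y₂)) := by
      refine ((hass (hX.symm.trans hx)).trans' h).trans' (hass ?_)
      rw [← hy, regProd_add, hy₁, hy₂, Ideal.span_singleton_mul_span_singleton]
    obtain ⟨e, he, ⟨e', he', hee⟩, h4⟩ := h3
    have ho0 := ne_zero_of_regProd hX
    obtain ⟨v, w, hv, hw, hovw, hav, haw⟩ := hH.t2 o ho ho0
      (algebraMap R _ y₁) (hRH _ hy₁0) (algebraMap R _ y₂ * e) (H.mul_mem (hRH _ hy₂0) he)
      (by rw [h4, map_mul, mul_assoc])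
    rw [hovw] at hX ho0
    obtain ⟨V, W, hVW, hV, hW⟩ := regProd_split ho0 hX
    refine ⟨V, W, hVW, ⟨v, hv, hV⟩, ⟨w, hw, hW⟩, ⟨v, y₁, hV, hy₁, hav⟩, ⟨w, y₂, hW, hy₂, ?_⟩⟩
    exact haw.trans' ⟨e, he, ⟨e', he', hee⟩, rfl⟩
  · rintro A ⟨x, y, hx, hy, h⟩
    have h1 : AssocIn H (algebraMap R (FractionRing R) x) 1 := by
      rw [← map_one (algebraMap R (FractionRing R))]
      refine h.trans' (hass ?_)
      rw [← hy, regProd_zero, Ideal.span_singleton_one]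
    obtain ⟨e, he, ⟨e', he', hee⟩, h2⟩ := h1
    rw [one_mul] at h2
    obtain ⟨b, -, hb⟩ := hH.t1' (x ^ N) (hpow hx) (pow_ne_zero N (ne_zero_of_regProd hx))
      ⟨e' ^ N, H.pow_mem he' N, by rw [map_pow, h2, ← mul_pow, hee, one_pow]⟩
    have hxu : IsUnit x := (isUnit_pow_iff hN.ne').1 (IsUnit.of_mul_eq_one b hb)
    apply regProd_inj (O := O)
    rw [hx, regProd_zero, Ideal.span_singleton_eq_top.2 hxu]
  · intro A hA
    obtain ⟨x, -, hx⟩ := (regProd_cls A).1 hA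
    exact ⟨x ^ N, hpow hx, by rw [regProd_nsmul, hx, Ideal.span_singleton_pow]⟩

end Build

theorem picard_iso_class_group
    {R : Type*} [CommRing R] [IsDomain R] [IsDedekindDomain R]
    (O : Subring R) (hne : O ≠ ⊤) (hfg : Module.Finite ↥O R)
    (hfrac : ∀ r : R, ∃ a b : ↥O, (b : R) ≠ 0 ∧ (b : R) * r = (a : R))
    (htor : ∀ c : ClassGroup R, ∃ n : ℕ, 0 < n ∧ c ^ n = 1)
    (hfin : Finite (R ⧸ O.conductor))
    (hcls : ∀ c : ClassGroup R, ∃ (P : Ideal R) (hP : P ∈ (Ideal R)⁰),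
      P.IsPrime ∧ ¬ O.conductor ≤ P ∧ ClassGroup.mk0 ⟨P, hP⟩ = c)
    (H : Submonoid (FractionRing R)) (hH : IsTKOvermonoid O H)
    (hcard : Nat.card (ClassGroup R) ≠ 2) :
    Nonempty (ClassGroup ↥O ≃* ClassGroup R) := by
  obtain ⟨s, hs, hs0⟩ := exists_cond_ne_zero hfg hfrac
  obtain ⟨N, hN, hNf⟩ := exists_exponent _ hfin
  have hdata := tkdata_of hH (fun r hr => ring_le_krull hH hfrac hs hs0 hr) hcls hN hNf
  have hcond : O.conductor ≠ ⊤ := by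
    intro h
    apply hne
    rw [eq_top_iff]
    intro x _
    exact cond_le (h ▸ Submodule.mem_top)
  have hgood : ∀ x : R, IsUnit (Ideal.Quotient.mk O.conductor x) → ∃ ε : Rˣ, x * ε ∈ O := by
    intro x hx
    have : Nontrivial (R ⧸ O.conductor) := Ideal.Quotient.nontrivial_iff.2 hcond
    have hx0 : x ≠ 0 := by
      rintro rfl
      rw [map_zero] at hx
      exact not_isUnit_zero hx
    have hcop : Ideal.span {x} ⊔ O.conductor = ⊤ := by
      have h1 := hNf x hx
      rw [Ideal.eq_top_iff_one]
      have h2 : (1 : R) = x ^ N - (x ^ N - 1) := by ring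
      rw [h2]
      refine Ideal.sub_mem _ (Ideal.mem_sup_left ?_) (Ideal.mem_sup_right h1)
      exact Ideal.mem_span_singleton.2 (dvd_pow_self x hN.ne')
    obtain ⟨A, hA⟩ := exists_regProd (O := O) (I := Ideal.span {x}) (by simpa using hx0) hcop
    obtain ⟨o, ho, hoA⟩ := hdata.main hcard A ((regProd_cls A).2 ⟨x, hx0, hA⟩)
    obtain ⟨u, hu⟩ := Ideal.span_singleton_eq_span_singleton.1 (hA.symm.trans hoA)
    exact ⟨u, hu ▸ ho⟩
  exact ⟨MulEquiv.ofBijective (ClassGroup.extendedHom O R)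
    ⟨extended_inj O hfin hgood, extended_surj O hfin htor hcls⟩⟩
end

section
/- Let R be a Dedekind domain with torsion class group and O ⊆ R an order with conductor f, R/f finite, and every class of Cl(R) containing a prime coprime to f. If O is transfer Krull (via a Krull overmonoid H of O^•) and Pic(O) ≅ Cl(R), then O ⊆ R is a root extension, i.e., for every a ∈ R there exists n ∈ ℕ with a^n ∈ O; equivalently, the map Spec(R) → Spec(O), P ↦ P ∩ O, is bijective. -/
open scoped nonZeroDivisors

variable {R₀ : Type*}

section Helpers

/-- In a finite monoid some positive power of any element is idempotent. -/
lemma aux_idem_pow {A : Type*} [CommMonoid A] [Finite A] (a : A) :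
    ∃ n : ℕ, 0 < n ∧ IsIdempotentElem (a ^ n) := by
  obtain ⟨m, k, hne, h⟩ := Finite.exists_ne_map_eq_of_infinite (fun n : ℕ => a ^ n)
  wlog hlt : m < k generalizing m k
  · exact this k m hne.symm h.symm (by omega)
  obtain ⟨d, rfl⟩ : ∃ d, k = m + d := ⟨k - m, by omega⟩
  have hd : 0 < d := by omega
  have step : ∀ i j, a ^ (m + i) = a ^ (m + i + j * d) := by
    intro i j
    induction j with
    | zero => simp
    | succ j ih =>
      rw [ih, show m + i + (j + 1) * d = (m + d) + (i + j * d) by ring, pow_add a (m + d), ← h,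
        ← pow_add]
      congr 1; ring
  refine ⟨(m + 1) * d, by positivity, ?_⟩
  unfold IsIdempotentElem
  have e : (m + 1) * d = m + ((m + 1) * d - m) := by
    have : m ≤ (m + 1) * d := by nlinarith
    omega
  rw [← pow_add]
  have := step ((m + 1) * d - m) (m + 1)
  rw [← e] at this
  exact this.symm

/-- An element idempotent modulo the conductor, whose zero set is saturated for
the contraction map, lies in `O`. -/
lemma aux_mem_of_idem {R : Type*} [CommRing R] (O : Subring R)
    (hfin : Finite (R ⧸ O.conductor)) (a : R)
    (hid : IsIdempotentElem (Ideal.Quotient.mk O.conductor a))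
    (h : ∀ P Q : Ideal R, P.IsPrime → Q.IsPrime → O.conductor ≤ P → O.conductor ≤ Q →
      (∀ x ∈ O, x ∈ P ↔ x ∈ Q) → a ∈ P → a ∈ Q) : a ∈ O := by
  set f := O.conductor with hf
  let B : Subring (R ⧸ f) := O.map (Ideal.Quotient.mk f)
  have hBfin : Finite B := inferInstance
  let φ : B →+* R ⧸ f := B.subtype
  let e := Ideal.Quotient.mk f a
  let s : Set (PrimeSpectrum B) := {q | ∃ P : PrimeSpectrum (R ⧸ f),
    PrimeSpectrum.comap φ P = q ∧ e ∉ P.asIdeal}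
  obtain ⟨b, hb, hbs⟩ := PrimeSpectrum.exists_idempotent_basicOpen_eq_of_isClopen
    (isClopen_discrete s)
  have key : φ b = e := by
    apply PrimeSpectrum.basicOpen_injOn_isIdempotentElem (hb.map φ) hid
    ext P
    have h1 : b ∉ (PrimeSpectrum.comap φ P).asIdeal ↔ PrimeSpectrum.comap φ P ∈ s := by
      rw [hbs]; rfl
    have h2 : φ b ∉ P.asIdeal ↔ PrimeSpectrum.comap φ P ∈ s := h1
    change φ b ∉ P.asIdeal ↔ e ∉ P.asIdeal
    rw [h2]
    constructor
    · rintro ⟨Q, hQ, hQe⟩ hPe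
      apply hQe
      have hle : ∀ P : PrimeSpectrum (R ⧸ f), f ≤ P.asIdeal.comap (Ideal.Quotient.mk f) := by
        intro P x hx
        rw [Ideal.mem_comap, Ideal.Quotient.eq_zero_iff_mem.mpr hx]
        exact zero_mem _
      refine h (P.asIdeal.comap (Ideal.Quotient.mk f)) (Q.asIdeal.comap (Ideal.Quotient.mk f))
        inferInstance inferInstance (hle P) (hle Q) ?_ hPe
      intro x hx
      have hxB : Ideal.Quotient.mk f x ∈ B := ⟨x, hx, rfl⟩
      have := congrArg (fun q : PrimeSpectrum B => (⟨_, hxB⟩ : B) ∈ q.asIdeal) hQ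
      exact (Eq.to_iff this).symm
    · intro hPe
      exact ⟨P, rfl, hPe⟩
  obtain ⟨o, ho, hoe⟩ := b.2
  have : a - o ∈ f := by
    rw [← Ideal.Quotient.eq]
    exact (hoe.trans key).symm
  have h3 : a - o ∈ O := by
    have := this 1
    simpa using this
  simpa using O.add_mem h3 ho

/-- The conductor is nonzero. -/
lemma aux_conductor {R : Type*} [CommRing R] [IsDomain R] (O : Subring R)
    (hfg : Module.Finite ↥O R)
    (hfrac : ∀ r : R, ∃ a b : ↥O, (b : R) ≠ 0 ∧ (b : R) * r = (a : R)) :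
    ∃ c ∈ O.conductor, c ≠ 0 := by
  classical
  obtain ⟨S, hS⟩ := hfg.fg_top
  choose a b hb hab using hfrac
  refine ⟨∏ s ∈ S, (b s : R), ?_, Finset.prod_ne_zero_iff.mpr fun s _ => hb s⟩
  intro r
  have hr : r ∈ Submodule.span O (S : Set R) := hS ▸ Submodule.mem_top
  induction hr using Submodule.span_induction with
  | mem x hx =>
    rw [← Finset.prod_erase_mul _ _ (Finset.mem_coe.mp hx), mul_assoc, hab]
    exact O.mul_mem (O.prod_mem fun s _ => (b s).2) (a x).2
  | zero => simp
  | add x y _ _ hx hy => rw [mul_add]; exact O.add_mem hx hy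
  | smul c x _ hx =>
    have : (∏ s ∈ S, (b s : R)) * (c • x) = (c : R) * ((∏ s ∈ S, (b s : R)) * x) := by
      rw [Subring.smul_def, smul_eq_mul]; ring
    rw [this]
    exact O.mul_mem c.2 hx

/-- Krull monoids are completely integrally closed, so `H` contains `R^∙`. -/
lemma aux_mem_H {R : Type*} [CommRing R] [IsDomain R] [IsDedekindDomain R]
    (O : Subring R) (H : Submonoid (FractionRing R)) (hH : IsTKOvermonoid O H)
    (c : R) (hc : c ∈ O.conductor) (hc0 : c ≠ 0) (r : R) (hr : r ≠ 0) :
    algebraMap R (FractionRing R) r ∈ H := by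
  obtain ⟨ι, d, hd⟩ := hH.krull
  have hmem : ∀ k : ℕ, algebraMap R (FractionRing R) (c * r ^ k) ∈ H := fun k =>
    hH.incl _ (hc _) (mul_ne_zero hc0 (pow_ne_zero _ hr))
  let h : ℕ → H := fun k => ⟨_, hmem k⟩
  have hrel : ∀ k : ℕ, (h 1) ^ (k + 1) = (h 0) ^ k * h (k + 1) := by
    intro k
    apply Subtype.ext
    simp only [h, SubmonoidClass.coe_pow, Submonoid.coe_mul, ← map_pow, ← map_mul]
    congr 1
    ring
  have hle : d (h 0) ∣ d (h 1) := by
    have hcoord : ∀ i, (d (h 0)).toAdd i ≤ (d (h 1)).toAdd i := by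
      intro i
      have hk := fun k => congrArg (fun z => (d z).toAdd i) (hrel k)
      simp only [map_pow, map_mul, toAdd_pow, toAdd_mul, Finsupp.add_apply, Finsupp.smul_apply,
        smul_eq_mul] at hk
      generalize (d (h 0)).toAdd i = y at *
      generalize (d (h 1)).toAdd i = x at *
      have := hk y
      by_contra hlt
      push Not at hlt
      nlinarith
    refine ⟨Multiplicative.ofAdd ((d (h 1)).toAdd - (d (h 0)).toAdd), ?_⟩
    apply Multiplicative.toAdd.injective
    ext i
    simp only [toAdd_mul, toAdd_ofAdd, Finsupp.add_apply, Finsupp.tsub_apply]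
    have := hcoord i
    omega
  obtain ⟨t, ht⟩ := hd _ _ hle
  have ht' := congrArg (Subtype.val) ht
  simp only [h, Submonoid.coe_mul, pow_zero, pow_one, mul_one, map_mul, map_one] at ht'
  have hc' : algebraMap R (FractionRing R) c ≠ 0 := by
    simpa using hc0
  have ht2 := mul_left_cancel₀ hc' ht'
  rw [ht2]
  exact t.2

/-- A prime ideal has a power generated by one element. -/
lemma aux_gen {R : Type*} [CommRing R] [IsDomain R] [IsDedekindDomain R]
    (htor : ∀ c : ClassGroup R, ∃ n : ℕ, 0 < n ∧ c ^ n = 1) (P : Ideal R) (hP : P ≠ ⊥) :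
    ∃ (x : R) (m : ℕ), 0 < m ∧ Ideal.span {x} = P ^ m := by
  have hP' : P ∈ (Ideal R)⁰ := mem_nonZeroDivisors_of_ne_zero hP
  obtain ⟨m, hm, h⟩ := htor (ClassGroup.mk0 ⟨P, hP'⟩)
  rw [← map_pow] at h
  have h2 : (P ^ m).IsPrincipal := (ClassGroup.mk0_eq_one_iff (pow_mem hP' m)).mp h
  obtain ⟨x, hx⟩ := h2
  exact ⟨x, m, hm, hx.symm⟩

/-- Factorizations in `H` lift: the bound on multiplicity. -/
lemma aux_pow_mem {R : Type*} [CommRing R] [IsDomain R] [IsDedekindDomain R]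
    (O : Subring R) (hfg : Module.Finite ↥O R)
    (H : Submonoid (FractionRing R)) (hH : IsTKOvermonoid O H)
    (Q : Ideal R) (x : R) (hx : algebraMap R (FractionRing R) x ∈ H)
    (hxu : ¬ ∃ y ∈ H, algebraMap R (FractionRing R) x * y = 1) (k : ℕ) :
    ∀ a ∈ O, a ≠ 0 →
      (∀ M : Ideal R, M.IsMaximal → a ∈ M → ∀ z ∈ O, z ∈ M ↔ z ∈ Q) →
      (∃ y ∈ H, algebraMap R (FractionRing R) a = algebraMap R (FractionRing R) x ^ k * y) →
      a ∈ Q ^ k := by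
  induction k with
  | zero => intro a _ _ _ _; simp
  | succ k ih =>
    rintro a ha ha0 hM ⟨y, hy, hay⟩
    obtain ⟨v, w, hv, hw, rfl, ⟨ε, hε, ⟨ε', hε', hεε⟩, hvx⟩, ⟨δ, hδ, -, hwx⟩⟩ :=
      hH.t2 a ha ha0 _ hx _ (H.mul_mem (H.pow_mem hx k) hy) (by rw [hay]; ring)
    have hv0 := left_ne_zero_of_mul ha0
    have hw0 := right_ne_zero_of_mul ha0
    have hwQ : w ∈ Q ^ k := by
      refine ih w hw hw0 (fun M hMm hwM => hM M hMm (M.mul_mem_left _ hwM))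
        ⟨y * δ, H.mul_mem hy hδ, ?_⟩
      rw [hwx]; ring
    have hvu : ¬ IsUnit v := by
      intro hu
      have hu' : IsUnit (⟨v, hv⟩ : O) := by
        have : Algebra.IsIntegral O R := inferInstance
        exact isUnit_of_map_unit (algebraMap O R) _ hu
      obtain ⟨w', hw'⟩ := hu'.exists_right_inv
      have e1 : v * (w' : R) = 1 := congrArg Subtype.val hw'
      have hw'0 : (w' : R) ≠ 0 := by
        intro h0; rw [h0, mul_zero] at e1; exact zero_ne_one e1
      apply hxu
      refine ⟨ε * algebraMap R _ (w' : R), H.mul_mem hε (hH.incl _ w'.2 hw'0), ?_⟩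
      rw [← mul_assoc, ← hvx, ← map_mul, e1, map_one]
    obtain ⟨M, hMm, hvM⟩ := exists_max_ideal_of_mem_nonunits hvu
    have hvQ : v ∈ Q := (hM M hMm (M.mul_mem_right _ hvM) v hv).mp hvM
    rw [pow_succ']
    exact Ideal.mul_mem_mul hvQ hwQ

/-- Fibers of the contraction map over primes containing the conductor are singletons. -/
lemma aux_fiber {R : Type*} [CommRing R] [IsDomain R] [IsDedekindDomain R]
    (O : Subring R) (hfg : Module.Finite ↥O R)
    (htor : ∀ c : ClassGroup R, ∃ n : ℕ, 0 < n ∧ c ^ n = 1)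
    (hfin : Finite (R ⧸ O.conductor))
    (c : R) (hc : c ∈ O.conductor) (hc0 : c ≠ 0)
    (H : Submonoid (FractionRing R)) (hH : IsTKOvermonoid O H)
    (P₁ P₂ : Ideal R) (hP₁ : P₁.IsPrime) (hP₂ : P₂.IsPrime)
    (hle₁ : O.conductor ≤ P₁) (hle₂ : O.conductor ≤ P₂)
    (heq : ∀ x ∈ O, x ∈ P₁ ↔ x ∈ P₂) : P₁ = P₂ := by
  classical
  by_contra hne
  set f := O.conductor with hf
  let Fib : Set (Ideal R) := {P | P.IsPrime ∧ f ≤ P ∧ ∀ x ∈ O, x ∈ P ↔ x ∈ P₁}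
  have hFfin : Fib.Finite := by
    have : Finite (Ideal (R ⧸ f)) := inferInstance
    refine Set.Finite.of_finite_image (f := Ideal.map (Ideal.Quotient.mk f)) (Set.toFinite _) ?_
    intro I hI J hJ hIJ
    rw [← Ideal.comap_map_mk hI.2.1, hIJ, Ideal.comap_map_mk hJ.2.1]
  have hbot : ∀ P : Ideal R, f ≤ P → P ≠ ⊥ := by
    rintro P hP rfl
    exact hc0 (by simpa using hP hc)
  have hgen : ∀ P : Ideal R, ∃ (x : R) (m : ℕ), P ∈ Fib → 0 < m ∧ Ideal.span {x} = P ^ m := by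
    intro P
    by_cases hP : P ∈ Fib
    · obtain ⟨x, m, h⟩ := aux_gen htor P (hbot P hP.2.1)
      exact ⟨x, m, fun _ => h⟩
    · exact ⟨0, 0, fun h => absurd h hP⟩
  choose π m hπ using hgen
  have hπ0 : ∀ P ∈ Fib, π P ≠ 0 := by
    intro P hP h0
    have := (hπ P hP).2
    rw [h0, Ideal.span_singleton_eq_bot.mpr rfl] at this
    exact hbot P hP.2.1 (pow_eq_zero_iff (hπ P hP).1.ne' |>.mp this.symm)
  have hmemself : ∀ P ∈ Fib, π P ∈ P := by
    intro P hP
    have : π P ∈ P ^ m P := (hπ P hP).2 ▸ Ideal.mem_span_singleton_self _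
    exact Ideal.pow_le_self (hπ P hP).1.ne' this
  have hmem : ∀ P ∈ Fib, ∀ M : Ideal R, M.IsPrime → π P ∈ M → M = P := by
    intro P hP M hM hx
    have h1 : P ^ m P ≤ M := by
      rw [← (hπ P hP).2, Ideal.span_singleton_le_iff_mem]; exact hx
    have h2 : P ≤ M := hM.le_of_pow_le h1
    have : P.IsMaximal := hP.1.isMaximal (hbot P hP.2.1)
    exact (this.eq_of_le hM.ne_top h2).symm
  let r : R := ∏ P ∈ hFfin.toFinset, π P
  have hr0 : r ≠ 0 := Finset.prod_ne_zero_iff.mpr fun P hP => hπ0 P (hFfin.mem_toFinset.mp hP)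
  have hrmem : ∀ M : Ideal R, M.IsPrime → (r ∈ M ↔ M ∈ Fib) := by
    intro M hM
    constructor
    · intro h
      obtain ⟨P, hP, hPM⟩ := (hM.prod_mem_iff).mp h
      rw [hFfin.mem_toFinset] at hP
      rwa [hmem P hP M hM hPM]
    · intro h
      exact hM.prod_mem_iff.mpr ⟨M, hFfin.mem_toFinset.mpr h, hmemself M h⟩
  have hsat : ∀ P Q : Ideal R, P.IsPrime → Q.IsPrime → f ≤ P → f ≤ Q →
      (∀ x ∈ O, x ∈ P ↔ x ∈ Q) → r ∈ P → r ∈ Q := by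
    intro P Q hP hQ _ hfQ hPQ h
    rw [hrmem P hP] at h
    rw [hrmem Q hQ]
    exact ⟨hQ, hfQ, fun x hx => (hPQ x hx).symm.trans (h.2.2 x hx)⟩
  obtain ⟨n, hn, hnid⟩ := aux_idem_pow (Ideal.Quotient.mk f r)
  have h1F : P₁ ∈ Fib := ⟨hP₁, hle₁, fun _ _ => Iff.rfl⟩
  have h2F : P₂ ∈ Fib := ⟨hP₂, hle₂, fun x hx => (heq x hx).symm⟩
  have hHr := aux_mem_H O H hH c hc hc0
  by_cases hall : ∀ P ∈ Fib, ∃ y ∈ H, algebraMap R (FractionRing R) (π P) * y = 1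
  · -- all generators are units of `H`
    have hrO : r ^ n ∈ O := by
      refine aux_mem_of_idem O hfin (r ^ n) (by simpa using hnid) ?_
      intro P Q hP hQ hfP hfQ hPQ h
      exact Q.pow_mem_of_mem (hsat P Q hP hQ hfP hfQ hPQ (hP.mem_of_pow_mem _ h)) _ hn
    have hru : ∃ y ∈ H, algebraMap R (FractionRing R) r * y = 1 := by
      choose! y hy hy1 using hall
      refine ⟨∏ P ∈ hFfin.toFinset, y P,
        H.prod_mem fun P hP => hy P (hFfin.mem_toFinset.mp hP), ?_⟩
      simp only [r, map_prod]
      rw [← Finset.prod_mul_distrib]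
      exact Finset.prod_eq_one fun P hP => hy1 P (hFfin.mem_toFinset.mp hP)
    obtain ⟨y, hy, hy1⟩ := hru
    obtain ⟨b, -, hb⟩ := hH.t1' (r ^ n) hrO (pow_ne_zero _ hr0)
      ⟨y ^ n, H.pow_mem hy n, by rw [map_pow, ← mul_pow, hy1, one_pow]⟩
    apply hP₁.ne_top
    rw [Ideal.eq_top_iff_one, ← hb]
    exact P₁.mul_mem_right _ (P₁.pow_mem_of_mem ((hrmem P₁ hP₁).mpr h1F) _ hn)
  · push Not at hall
    obtain ⟨P, hPF, hPu⟩ := hall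
    obtain ⟨Q, hQF, hQP⟩ : ∃ Q ∈ Fib, Q ≠ P := by
      by_cases h : P₁ = P
      · exact ⟨P₂, h2F, fun h' => hne (h.trans h'.symm)⟩
      · exact ⟨P₁, h1F, h⟩
    obtain ⟨n', hn', hnid'⟩ := aux_idem_pow (Ideal.Quotient.mk f (π P))
    have hQprime := hQF.1
    have hQk : ∀ j : ℕ, r ^ n ∈ Q ^ j := by
      intro j
      let a := r ^ n * (π P) ^ (n' * j)
      have hamem : ∀ M : Ideal R, M.IsPrime → (a ∈ M ↔ r ∈ M) := by
        intro M hM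
        constructor
        · intro h
          rcases hM.mem_or_mem h with h | h
          · exact hM.mem_of_pow_mem _ h
          · rw [hmem P hPF M hM (hM.mem_of_pow_mem _ h)]
            exact (hrmem P hPF.1).mpr hPF
        · intro h
          exact M.mul_mem_right _ (M.pow_mem_of_mem h _ hn)
      have haO : a ∈ O := by
        refine aux_mem_of_idem O hfin a ?_ ?_
        · simp only [a, map_mul, map_pow, pow_mul (Ideal.Quotient.mk O.conductor (π P)) n' j]
          exact hnid.mul (hnid'.pow j)
        · intro P Q hP hQ hfP hfQ hPQ h
          rw [hamem P hP] at h
          rw [hamem Q hQ]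
          exact hsat P Q hP hQ hfP hfQ hPQ h
      have ha0 : a ≠ 0 := mul_ne_zero (pow_ne_zero _ hr0) (pow_ne_zero _ (hπ0 P hPF))
      have haQ : a ∈ Q ^ (n' * j) := by
        refine aux_pow_mem O hfg H hH Q (π P) (hHr _ (hπ0 P hPF)) ?_ (n' * j) a haO ha0 ?_ ?_
        · rintro ⟨y, hy, hy1⟩
          exact hPu y hy hy1
        · intro M hM haM z hz
          have hMF := (hrmem M hM.isPrime).mp ((hamem M hM.isPrime).mp haM)
          exact (hMF.2.2 z hz).trans (hQF.2.2 z hz).symm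
        · refine ⟨_, hHr (r ^ n) (pow_ne_zero _ hr0), ?_⟩
          simp only [a, map_mul, map_pow]
          ring
      have hnot : (π P) ^ (n' * j) ∉ Q := fun h =>
        hQP (hmem P hPF Q hQF.1 (hQF.1.mem_of_pow_mem _ h))
      have haQ' : (π P) ^ (n' * j) * r ^ n ∈ Q ^ (n' * j) := by
        rw [mul_comm (π P ^ (n' * j))]; exact haQ
      have := (Ideal.IsPrime.mul_mem_pow Q haQ').resolve_left hnot
      exact Ideal.pow_le_pow_right (Nat.le_mul_of_pos_left j hn') this
    have hinf := Ideal.iInf_pow_eq_bot_of_isDomain Q hQF.1.ne_top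
    have : r ^ n ∈ (⨅ i : ℕ, Q ^ i) := by
      rw [Ideal.mem_iInf]; exact hQk
    rw [hinf] at this
    exact pow_ne_zero _ hr0 (by simpa using this)

end Helpers

theorem transfer_krull_root_extension
    {R : Type*} [CommRing R] [IsDomain R] [IsDedekindDomain R]
    (O : Subring R) (hne : O ≠ ⊤) (hfg : Module.Finite ↥O R)
    (hfrac : ∀ r : R, ∃ a b : ↥O, (b : R) ≠ 0 ∧ (b : R) * r = (a : R))
    (htor : ∀ c : ClassGroup R, ∃ n : ℕ, 0 < n ∧ c ^ n = 1)
    (hfin : Finite (R ⧸ O.conductor))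
    (hcls : ∀ c : ClassGroup R, ∃ (P : Ideal R) (hP : P ∈ (Ideal R)⁰),
      P.IsPrime ∧ ¬ O.conductor ≤ P ∧ ClassGroup.mk0 ⟨P, hP⟩ = c)
    (H : Submonoid (FractionRing R)) (hH : IsTKOvermonoid O H)
    (hpic : Nonempty (ClassGroup ↥O ≃* ClassGroup R)) :
    (∀ a : R, ∃ n : ℕ, 0 < n ∧ a ^ n ∈ O) ∧
    Function.Bijective (PrimeSpectrum.comap (Subring.subtype O) :
      PrimeSpectrum R → PrimeSpectrum ↥O) := by
  obtain ⟨c, hc, hc0⟩ := aux_conductor O hfg hfrac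
  have hinj : ∀ P Q : Ideal R, P.IsPrime → Q.IsPrime →
      (∀ x ∈ O, x ∈ P ↔ x ∈ Q) → P = Q := by
    intro P Q hP hQ h
    have hcO : ∀ z ∈ O.conductor, z ∈ O := fun z hz => by simpa using hz 1
    by_cases hle : O.conductor ≤ P
    · have hle' : O.conductor ≤ Q := fun z hz => (h z (hcO z hz)).mp (hle hz)
      exact aux_fiber O hfg htor hfin c hc hc0 H hH P Q hP hQ hle hle' h
    · obtain ⟨z, hz, hzP⟩ := SetLike.not_le_iff_exists.mp hle
      have hzQ : z ∉ Q := fun h' => hzP ((h z (hcO z hz)).mpr h')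
      ext x
      constructor
      · intro hx
        exact (hQ.mem_or_mem ((h (z * x) (hz x)).mp (P.mul_mem_left _ hx))).resolve_left hzQ
      · intro hx
        exact (hP.mem_or_mem ((h (z * x) (hz x)).mpr (Q.mul_mem_left _ hx))).resolve_left hzP
  refine ⟨?_, ?_, ?_⟩
  · intro a
    obtain ⟨n, hn, hid⟩ := aux_idem_pow (Ideal.Quotient.mk O.conductor a)
    refine ⟨n, hn, aux_mem_of_idem O hfin (a ^ n) (by simpa using hid) ?_⟩
    intro P Q hP hQ _ _ h ha
    rwa [← hinj P Q hP hQ h]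
  · intro P Q h
    apply PrimeSpectrum.ext
    refine hinj _ _ P.isPrime Q.isPrime fun x hx => ?_
    exact Eq.to_iff (congrArg (fun q : PrimeSpectrum O => (⟨x, hx⟩ : O) ∈ q.asIdeal) h)
  · exact Algebra.IsIntegral.comap_surjective O R
end
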